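/- arXiv:1511.07317 — 4 statements merged into one kernel-verified Lean document; each statement's English description precedes it below -/
import Mathlib

section
/- Let k ≥ 1 be an integer and let p be an odd prime with p ≥ k. Then E_{(a,b,c)∈(ℤ/pℤ)³} ∏_{i=0}^{k−1} Λ_p(a + i(b²+c²)) equals (1 + 1/(p−1))^k·(1 − k/p + 2(k−1)/p² − (k−1)/p³) if p ≡ 1 (mod 4), and equals (1 + 1/(p−1))^k·(1 − k/p + (k−1)/p³) if p ≡ 3 (mod 4). -/
noncomputable def localVM (q : ℕ) (n : ℤ) : ℝ :=
  if Int.gcd n q = 1 then (q : ℝ) / (Nat.totient q : ℝ) else 0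

/-- E_{(a,b,c)∈(ℤ/pℤ)³} ∏_{i=0}^{k−1} Λ_p(a + i(b²+c²)). -/
noncomputable def betapAP (k p : ℕ) : ℝ :=
  (∑ a : Fin p, ∑ b : Fin p, ∑ c : Fin p,
      ∏ i ∈ Finset.range k,
        localVM p ((a : ℤ) + (i : ℤ) * ((b : ℤ) ^ 2 + (c : ℤ) ^ 2))) / (p : ℝ) ^ 3

/-!
Over `ZMod p` the average counts, up to the factor `(p / φ(p)) ^ k`, the triples `(a, b, c)` for
which no term of the progression `a, a + d, …, a + (k - 1) d` with `d = b² + c²` vanishes. For fixed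
`d` the forbidden values of `a` are `0, -d, …, -(k - 1) d`: these are `k` distinct residues if
`d ≠ 0`, and a single one if `d = 0`. So everything reduces to the number of solutions of
`b² + c² = 0`, which is the union of two lines through the origin if `-1` is a square, and the
origin alone otherwise.
-/

open Finset

section SumOfTwoSquares

lemma sq_add_sq_eq_zero_iff_of_mul_self_eq_neg_one {R : Type*} [CommRing R] [NoZeroDivisors R]
    {s : R} (hs : s * s = -1) (b c : R) :
    b ^ 2 + c ^ 2 = 0 ↔ c = s * b ∨ c = -(s * b) := by
  have hsb : (s * b) ^ 2 = -b ^ 2 := by linear_combination b ^ 2 * hs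
  rw [← sq_eq_sq_iff_eq_or_eq_neg, hsb, eq_neg_iff_add_eq_zero, add_comm]

lemma sq_add_sq_eq_zero_iff_of_not_isSquare_neg_one {F : Type*} [Field F]
    (hF : ¬IsSquare (-1 : F)) (b c : F) : b ^ 2 + c ^ 2 = 0 ↔ b = 0 ∧ c = 0 := by
  refine ⟨fun hbc => ?_, by rintro ⟨rfl, rfl⟩; simp⟩
  have hc : c = 0 := by
    by_contra hc
    exact hF ⟨b / c, by field_simp; linear_combination -hbc⟩
  exact ⟨by simpa [hc] using hbc, hc⟩

lemma card_sq_add_sq_eq_zero_of_isSquare_neg_one {R : Type*} [CommRing R] [IsDomain R]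
    [Fintype R] [DecidableEq R] (h2 : (2 : R) ≠ 0) (hR : IsSquare (-1 : R)) :
    #{x : R × R | x.1 ^ 2 + x.2 ^ 2 = 0} = 2 * Fintype.card R - 1 := by
  obtain ⟨s, hs⟩ := hR
  have hs0 : s ≠ 0 := by rintro rfl; simp at hs
  let line (t : R) : Finset (R × R) := univ.image fun b => (b, t * b)
  have card_line (t : R) : #(line t) = Fintype.card R :=
    card_image_of_injective _ fun _ _ h => congrArg Prod.fst h
  have solutions_eq : ({x : R × R | x.1 ^ 2 + x.2 ^ 2 = 0} : Finset _) = line s ∪ line (-s) := by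
    ext ⟨b, c⟩
    simp [line, sq_add_sq_eq_zero_iff_of_mul_self_eq_neg_one hs.symm, eq_comm]
  have inter_eq : line s ∩ line (-s) = {(0, 0)} := by
    ext ⟨b, c⟩
    simp only [line, mem_inter, mem_image, mem_univ, true_and, Prod.mk.injEq, exists_eq_left,
      mem_singleton]
    refine ⟨fun ⟨hc, hc'⟩ => ?_, by rintro ⟨rfl, rfl⟩; simp⟩
    have hb : b = 0 := by
      have : 2 * s * b = 0 := by linear_combination hc - hc'
      simpa [h2, hs0] using this
    exact ⟨hb, by simp [← hc, hb]⟩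
  rw [solutions_eq, card_union, inter_eq, card_line, card_line, card_singleton, two_mul]

lemma card_sq_add_sq_eq_zero {F : Type*} [Field F] [Fintype F] [DecidableEq F]
    (hF : Odd (Fintype.card F)) :
    #{x : F × F | x.1 ^ 2 + x.2 ^ 2 = 0} =
      if Fintype.card F % 4 = 1 then 2 * Fintype.card F - 1 else 1 := by
  have hodd : Fintype.card F % 2 = 1 := Nat.odd_iff.1 hF
  split_ifs with h
  · have h2 : (2 : F) ≠ 0 := Ring.two_ne_zero fun hchar => by
      have := FiniteField.even_card_of_char_two hchar
      omega
    exact card_sq_add_sq_eq_zero_of_isSquare_neg_one h2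
      (FiniteField.isSquare_neg_one_iff.2 (by omega))
  · have hns : ¬IsSquare (-1 : F) := by
      rw [FiniteField.isSquare_neg_one_iff]
      omega
    simp only [sq_add_sq_eq_zero_iff_of_not_isSquare_neg_one hns, ← Prod.mk_eq_zero, Prod.mk.eta,
      filter_eq', mem_univ, if_true, card_singleton]

end SumOfTwoSquares

section Progression

variable {R : Type*} [Ring R] [IsDomain R] [DecidableEq R] {p : ℕ} [CharP R p] {k : ℕ}

lemma card_image_neg_natCast_mul (hk : 1 ≤ k) (hkp : k ≤ p) (d : R) :
    #((range k).image fun i : ℕ => -((i : R) * d)) = if d = 0 then 1 else k := by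
  split_ifs with hd
  · simp [hd, image_const (nonempty_range_iff.2 (Nat.one_le_iff_ne_zero.1 hk))]
  · rw [card_image_of_injOn, card_range]
    intro i hi j hj hij
    have hcast : (i : R) = j := mul_right_cancel₀ hd (neg_injective hij)
    exact CharP.natCast_injOn_Iio R p ((mem_range.1 hi).trans_le hkp)
      ((mem_range.1 hj).trans_le hkp) hcast

lemma card_forall_add_natCast_mul_ne_zero [Fintype R] (hk : 1 ≤ k) (hkp : k ≤ p) (d : R) :
    #{a : R | ∀ i ∈ range k, a + (i : R) * d ≠ 0} =
      Fintype.card R - k + if d = 0 then k - 1 else 0 := by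
  have hkR : k ≤ Fintype.card R :=
    hkp.trans <| Nat.le_of_dvd Fintype.card_pos <|
      (CharP.cast_eq_zero_iff R p _).1 (Nat.cast_card_eq_zero R)
  have compl_eq : ({a : R | ∀ i ∈ range k, a + (i : R) * d ≠ 0} : Finset R) =
      ((range k).image fun i : ℕ => -((i : R) * d))ᶜ := by
    ext a
    simp [add_eq_zero_iff_eq_neg, eq_comm]
  rw [compl_eq, card_compl, card_image_neg_natCast_mul hk hkp]
  split_ifs <;> omega

lemma card_prod_forall_add_natCast_mul_ne_zero [Fintype R] {X : Type*} [Fintype X] (hk : 1 ≤ k)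
    (hkp : k ≤ p) (d : X → R) :
    #{x : R × X | ∀ i ∈ range k, x.1 + (i : R) * d x.2 ≠ 0} =
      Fintype.card X * (Fintype.card R - k) + #{x | d x = 0} * (k - 1) := by
  calc #{x : R × X | ∀ i ∈ range k, x.1 + (i : R) * d x.2 ≠ 0}
      = ∑ x, #{a : R | ∀ i ∈ range k, a + (i : R) * d x ≠ 0} := by
        simp only [card_filter, Fintype.sum_prod_type_right]
    _ = ∑ x, (Fintype.card R - k + if d x = 0 then k - 1 else 0) :=
        sum_congr rfl fun x _ => card_forall_add_natCast_mul_ne_zero hk hkp (d x)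
    _ = Fintype.card X * (Fintype.card R - k) + #{x | d x = 0} * (k - 1) := by
        simp [sum_add_distrib, ← sum_filter]

end Progression

section LocalFactor

variable {q : ℕ}

open Classical in
lemma localVM_eq_ite_isUnit (n : ℤ) :
    localVM q n = if IsUnit (n : ZMod q) then (q : ℝ) / q.totient else 0 := by
  simp only [localVM, ZMod.coe_int_isUnit_iff_isCoprime, Int.isCoprime_iff_gcd_eq_one,
    Int.gcd_comm n]

open Classical in
lemma prod_localVM {ι : Type*} (s : Finset ι) (f : ι → ℤ) :
    ∏ i ∈ s, localVM q (f i) =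
      if ∀ i ∈ s, IsUnit (f i : ZMod q) then ((q : ℝ) / q.totient) ^ #s else 0 := by
  simp only [localVM_eq_ite_isUnit, prod_ite_zero, prod_const]

lemma sum_fin_intCast_zmod {M : Type*} [AddCommMonoid M] [NeZero q] (f : ZMod q → M) :
    ∑ a : Fin q, f ((a : ℤ) : ZMod q) = ∑ a : ZMod q, f a := by
  obtain ⟨n, rfl⟩ := Nat.exists_eq_succ_of_ne_zero (NeZero.ne q)
  -- `ZMod (n + 1)` unfolds to `Fin (n + 1)`, so both sums range over the same type.
  refine sum_congr rfl fun a _ => congrArg f ?_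
  rw [Int.cast_natCast]
  exact ZMod.natCast_zmod_val (n := n + 1) a

open Classical in
lemma betapAP_eq_card_isUnit [NeZero q] (k : ℕ) :
    betapAP k q = ((q : ℝ) / q.totient) ^ k *
      #{x : ZMod q × ZMod q × ZMod q |
        ∀ i ∈ range k, IsUnit (x.1 + (i : ZMod q) * (x.2.1 ^ 2 + x.2.2 ^ 2))} / (q : ℝ) ^ 3 := by
  let weight (a b c : ZMod q) : ℝ :=
    if ∀ i ∈ range k, IsUnit (a + (i : ZMod q) * (b ^ 2 + c ^ 2)) then
      ((q : ℝ) / q.totient) ^ k else 0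
  have prod_eq (a b c : ℤ) :
      ∏ i ∈ range k, localVM q (a + (i : ℤ) * (b ^ 2 + c ^ 2)) = weight a b c := by
    simp [weight, prod_localVM]
  have sum_eq : ∑ a : Fin q, ∑ b : Fin q, ∑ c : Fin q, weight (a : ℤ) (b : ℤ) (c : ℤ) =
      ∑ a, ∑ b, ∑ c, weight a b c := by
    simp only [← sum_fin_intCast_zmod]
  simp only [betapAP, prod_eq]
  rw [sum_eq]
  simp only [weight, card_filter, Fintype.sum_prod_type, Nat.cast_sum, mul_sum, Nat.cast_ite,
    Nat.cast_one, Nat.cast_zero, mul_ite, mul_one, mul_zero]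

lemma div_totient_eq_of_prime {p : ℕ} (hp : p.Prime) :
    (p : ℝ) / p.totient = 1 + 1 / ((p : ℝ) - 1) := by
  have hp1 : (p : ℝ) - 1 ≠ 0 := sub_ne_zero.2 (by exact_mod_cast hp.ne_one)
  rw [Nat.totient_prime hp, Nat.cast_sub hp.one_le, Nat.cast_one]
  field_simp
  ring

lemma betapAP_eq_card_sq_add_sq_eq_zero {k p : ℕ} [hp : Fact p.Prime] (hk : 1 ≤ k) (hkp : k ≤ p) :
    betapAP k p = (1 + 1 / ((p : ℝ) - 1)) ^ k *
      (1 - k / p + #{x : ZMod p × ZMod p | x.1 ^ 2 + x.2 ^ 2 = 0} * (k - 1) / (p : ℝ) ^ 3) := by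
  have hp0 : (p : ℝ) ≠ 0 := by exact_mod_cast hp.out.ne_zero
  have hcard := card_prod_forall_add_natCast_mul_ne_zero (R := ZMod p) hk hkp
    fun x : ZMod p × ZMod p => x.1 ^ 2 + x.2 ^ 2
  rw [Fintype.card_prod, ZMod.card] at hcard
  simp only [betapAP_eq_card_isUnit, isUnit_iff_ne_zero, div_totient_eq_of_prime hp.out]
  rw [hcard]
  push_cast [hk, hkp]
  field_simp

end LocalFactor

/-- explicit value of the local factor for primes p ≥ k. -/
theorem statement3 (k p : ℕ) (hk : 1 ≤ k) (hp : p.Prime) (hodd : Odd p) (hpk : k ≤ p) :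
    betapAP k p =
      if p % 4 = 1 then
        (1 + 1 / ((p : ℝ) - 1)) ^ k *
          (1 - (k : ℝ) / (p : ℝ) + 2 * ((k : ℝ) - 1) / (p : ℝ) ^ 2
            - ((k : ℝ) - 1) / (p : ℝ) ^ 3)
      else
        (1 + 1 / ((p : ℝ) - 1)) ^ k *
          (1 - (k : ℝ) / (p : ℝ) + ((k : ℝ) - 1) / (p : ℝ) ^ 3) := by
  have : Fact p.Prime := ⟨hp⟩
  have hp0 : (p : ℝ) ≠ 0 := by exact_mod_cast hp.ne_zero
  have hzeros := card_sq_add_sq_eq_zero (F := ZMod p) (by rwa [ZMod.card])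
  rw [ZMod.card] at hzeros
  rw [betapAP_eq_card_sq_add_sq_eq_zero hk hpk, hzeros]
  split_ifs
  · rw [Nat.cast_sub (by have := hp.one_le; omega)]
    push_cast
    field_simp
    ring
  · simp
end

section
/- Let k ≥ 2 be an integer. For every odd prime p with p ≤ k, E_{(a,b,c)∈(ℤ/pℤ)³} ∏_{i=0}^{k−1} Λ_p(a + i(b²+c²)) equals (p/(p−1))^k·(p−1)(2p−1)/p³ if p ≡ 1 (mod 4), and equals (p/(p−1))^k·(p−1)/p³ if p ≡ 3 (mod 4). Moreover E_{(a,b,c)∈(ℤ/2ℤ)³} ∏_{i=0}^{k−1} Λ_2(a + i(b²+c²)) = 2^{k−2}. -/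
/-!
If `s ≠ 0` modulo a prime `p ≤ k`, the progression `a, a + s, …, a + (k - 1) s` covers all residues
and so meets `0`. Hence only the zeros of `b² + c²` contribute to the average, and each of them
contributes `(p / (p - 1)) ^ k` for every `a ≠ 0`. For odd `p` the zeros are counted by summing over
`b` the number `1 + χ(-b²)` of square roots of `-b²`, where `χ` is the quadratic character; for
`p = 2` they form the diagonal, since `b² + c² = (b + c)²`.
-/

open Finset

section SumTwoSquares

/-- The zeros of the binary quadratic form `b² + c²` over a finite ring, whose number determines
the average `betapAP k p` for primes `p ≤ k`. -/
def sumTwoSqZeros (R : Type*) [CommRing R] [Fintype R] [DecidableEq R] : Finset (R × R) :=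
  {v | v.1 ^ 2 + v.2 ^ 2 = 0}

theorem card_sumTwoSqZeros_of_charP_two (R : Type*) [CommRing R] [IsReduced R] [CharP R 2]
    [Fintype R] [DecidableEq R] : #(sumTwoSqZeros R) = Fintype.card R := by
  have zeros_eq_diag : sumTwoSqZeros R = univ.diag := by
    ext ⟨b, c⟩
    simp [sumTwoSqZeros, ← CharTwo.add_sq, CharTwo.add_eq_zero]
  rw [zeros_eq_diag, diag_card, card_univ]

variable (F : Type*) [Field F] [Fintype F] [DecidableEq F]

theorem sum_quadraticChar_neg_sq :
    ∑ b : F, quadraticChar F (-b ^ 2) = quadraticChar F (-1) * (Fintype.card F - 1) := by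
  have char_neg_sq (b : F) (hb : b ∈ univ.erase 0) :
      quadraticChar F (-b ^ 2) = quadraticChar F (-1) := by
    rw [neg_eq_neg_one_mul, map_mul, quadraticChar_sq_one' (ne_of_mem_erase hb), mul_one]
  rw [← add_sum_erase univ _ (mem_univ 0), sum_congr rfl char_neg_sq, sum_const,
    card_erase_of_mem (mem_univ 0), card_univ, nsmul_eq_mul, Nat.cast_pred Fintype.card_pos]
  simp [mul_comm]

theorem card_sumTwoSqZeros_of_ringChar_ne_two (hF : ringChar F ≠ 2) :
    (#(sumTwoSqZeros F) : ℤ) =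
      Fintype.card F + quadraticChar F (-1) * (Fintype.card F - 1) := by
  have card_fiber (b : F) :
      (#{c : F | b ^ 2 + c ^ 2 = 0} : ℤ) = quadraticChar F (-b ^ 2) + 1 := by
    rw [← quadraticChar_card_sqrts hF]
    congr 2
    ext c
    simp [eq_neg_iff_add_eq_zero, add_comm]
  have card_eq_sum_fibers :
      (#(sumTwoSqZeros F) : ℤ) = ∑ b : F, (#{c : F | b ^ 2 + c ^ 2 = 0} : ℤ) := by
    simp only [sumTwoSqZeros, card_filter, Fintype.sum_prod_type, Nat.cast_sum]
  simp only [card_eq_sum_fibers, card_fiber, sum_add_distrib, sum_quadraticChar_neg_sq, sum_const,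
    card_univ, nsmul_eq_mul, mul_one]
  ring

theorem card_sumTwoSqZeros_zmod_of_odd {p : ℕ} [Fact p.Prime] (hodd : Odd p) :
    (#(sumTwoSqZeros (ZMod p)) : ℝ) = if p % 4 = 1 then 2 * (p : ℝ) - 1 else 1 := by
  have hchar : ringChar (ZMod p) ≠ 2 := by
    rw [ZMod.ringChar_zmod_n]
    rintro rfl
    exact absurd hodd (by decide)
  have hcard := card_sumTwoSqZeros_of_ringChar_ne_two (ZMod p) hchar
  rw [quadraticChar_neg_one hchar, ZMod.card, ZMod.χ₄_nat_eq_if_mod_four,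
    if_neg (Nat.mod_two_ne_zero.mpr (Nat.odd_iff.mp hodd))] at hcard
  rw [← Int.cast_natCast, hcard]
  split_ifs <;> push_cast <;> ring

end SumTwoSquares

section LocalVonMangoldt

open Classical in
/-- The local von Mangoldt function `Λ_q` as a function on residues modulo `q`, with coprimality to
`q` expressed as invertibility, so that averages of `Λ_q` can be computed in the ring `ZMod q`. -/
noncomputable def residueVM (q : ℕ) (x : ZMod q) : ℝ :=
  if IsUnit x then (q : ℝ) / (Nat.totient q : ℝ) else 0

theorem localVM_eq_residueVM (q : ℕ) (n : ℤ) : localVM q n = residueVM q n := by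
  simp only [localVM, residueVM, ZMod.coe_int_isUnit_iff_isCoprime, Int.isCoprime_iff_gcd_eq_one,
    Int.gcd_comm]

theorem sum_fin_natCast_eq_sum_zmod {M : Type*} [AddCommMonoid M] (q : ℕ) [NeZero q]
    (f : ZMod q → M) :
    ∑ a : Fin q, f (a : ℕ) = ∑ x : ZMod q, f x := by
  obtain ⟨n, rfl⟩ := Nat.exists_eq_succ_of_ne_zero (NeZero.ne q)
  exact Fintype.sum_congr _ _ fun a ↦ congrArg f (ZMod.natCast_zmod_val (n := n + 1) a)

theorem betapAP_eq_sum_zmod (k q : ℕ) [NeZero q] :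
    betapAP k q = (∑ a : ZMod q, ∑ v : ZMod q × ZMod q,
      ∏ i ∈ range k, residueVM q (a + i * (v.1 ^ 2 + v.2 ^ 2))) / (q : ℝ) ^ 3 := by
  simp only [betapAP, localVM_eq_residueVM, Fintype.sum_prod_type, ← sum_fin_natCast_eq_sum_zmod q]
  push_cast
  rfl

variable (p : ℕ) [hp : Fact p.Prime]

theorem residueVM_of_prime (x : ZMod p) :
    residueVM p x = if x = 0 then 0 else (p : ℝ) / ((p : ℝ) - 1) := by
  simp [residueVM, isUnit_iff_ne_zero, Nat.totient_prime hp.out, Nat.cast_pred hp.out.pos]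

variable {p} {k : ℕ}

theorem exists_mem_range_add_mul_eq_zero (hpk : p ≤ k) (a : ZMod p) {s : ZMod p} (hs : s ≠ 0) :
    ∃ i ∈ range k, a + i * s = 0 := by
  refine ⟨(-a / s).val, mem_range.mpr ((ZMod.val_lt _).trans_le hpk), ?_⟩
  rw [ZMod.natCast_zmod_val, div_mul_cancel₀ _ hs, add_neg_cancel]

theorem prod_residueVM_progression (hpk : p ≤ k) (a s : ZMod p) :
    ∏ i ∈ range k, residueVM p (a + i * s) =
      if a ≠ 0 ∧ s = 0 then ((p : ℝ) / ((p : ℝ) - 1)) ^ k else 0 := by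
  rcases eq_or_ne s 0 with rfl | hs
  · have hk : k ≠ 0 := (hp.out.pos.trans_le hpk).ne'
    by_cases ha : a = 0 <;> simp [residueVM_of_prime, ha, hk, div_pow]
  · obtain ⟨i, hi, hzero⟩ := exists_mem_range_add_mul_eq_zero hpk a hs
    have factor_eq_zero : residueVM p (a + i * s) = 0 := by rw [residueVM_of_prime, if_pos hzero]
    rw [prod_eq_zero hi factor_eq_zero, if_neg fun h ↦ hs h.2]

theorem sum_prod_residueVM_progression {ι : Type*} [Fintype ι] (hpk : p ≤ k) (s : ι → ZMod p) :
    ∑ a : ZMod p, ∑ v : ι, ∏ i ∈ range k, residueVM p (a + i * s v) =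
      ((p : ℝ) / ((p : ℝ) - 1)) ^ k * (((p : ℝ) - 1) * #{v | s v = 0}) := by
  have card_nonzero : (#{a : ZMod p | a ≠ 0} : ℝ) = p - 1 := by
    rw [filter_ne' univ, card_erase_of_mem (mem_univ 0), card_univ, ZMod.card,
      Nat.cast_pred hp.out.pos]
  rw [← Fintype.sum_prod_type']
  simp only [prod_residueVM_progression hpk]
  rw [← sum_filter, sum_const, ← univ_product_univ, filter_product (· ≠ 0) (s · = 0),
    card_product, nsmul_eq_mul, Nat.cast_mul, card_nonzero, mul_comm]

theorem betapAP_of_prime_le (hpk : p ≤ k) :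
    betapAP k p =
      ((p : ℝ) / ((p : ℝ) - 1)) ^ k *
        (((p : ℝ) - 1) * #(sumTwoSqZeros (ZMod p)) / (p : ℝ) ^ 3) := by
  rw [betapAP_eq_sum_zmod,
    sum_prod_residueVM_progression hpk fun v : ZMod p × ZMod p ↦ v.1 ^ 2 + v.2 ^ 2, mul_div_assoc,
    sumTwoSqZeros]

end LocalVonMangoldt

/-- explicit value of the local factor for primes p ≤ k. -/
theorem statement4 (k : ℕ) (hk : 2 ≤ k) :
    (∀ p : ℕ, p.Prime → Odd p → p ≤ k →
      betapAP k p =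
        if p % 4 = 1 then
          ((p : ℝ) / ((p : ℝ) - 1)) ^ k * (((p : ℝ) - 1) * (2 * (p : ℝ) - 1) / (p : ℝ) ^ 3)
        else
          ((p : ℝ) / ((p : ℝ) - 1)) ^ k * (((p : ℝ) - 1) / (p : ℝ) ^ 3)) ∧
    betapAP k 2 = 2 ^ (k - 2) := by
  constructor
  · intro p hp hodd hpk
    have : Fact p.Prime := ⟨hp⟩
    rw [betapAP_of_prime_le hpk, card_sumTwoSqZeros_zmod_of_odd hodd]
    split_ifs <;> simp only [mul_one]
  · rw [betapAP_of_prime_le hk, card_sumTwoSqZeros_of_charP_two, ZMod.card]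
    obtain ⟨m, rfl⟩ := Nat.exists_eq_add_of_le' hk
    rw [Nat.add_sub_cancel]
    push_cast
    ring
end

section
/- Let R(n) = #{(x,y) ∈ ℤ² : x² + y² = n} be the number of representations of n as a sum of two squares. Then Σ_{n ≤ N} Λ(n)·R(n) = 4N + o(N) as N → ∞. -/
open Filter

/-- R(n): the number of representations of n as an ordered sum of two squares
of integers. -/
noncomputable def sumTwoSquaresRep (n : ℕ) : ℕ :=
  Set.ncard {p : ℤ × ℤ | p.1 ^ 2 + p.2 ^ 2 = (n : ℤ)}

/-!
At an odd prime `p` the number of representations is `8` or `0` according as `p ≡ 1` or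
`p ≡ 3 (mod 4)`, so up to proper prime powers `Λ(n) R(n)` equals `8 Λ(n) 1_{n ≡ 1 (mod 4)}`.
Unique factorisation in `ℤ[i]` gives `R(p ^ k) ≤ 4 (k + 1)`, hence the proper prime powers up to `N`
contribute `O(√N log N)`.

The prime number theorem for `n ≡ 1 (mod 4)`, with density `1 / φ(4) = 1 / 2`, comes from the
Wiener–Ikehara argument. With `S(u) = e^{-u} ∑_{n ≤ e^u} f(n)`, the Laplace transform of `S - c`
extends continuously to `Re z ≥ 0` because the `L`-functions do not vanish on `Re s = 1`. The Fejér
kernel is the Fourier transform of a compactly supported function, so its convolutions with `S - c`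
at every scale are Fourier integrals of these boundary values and tend to `0` by Riemann–Lebesgue;
monotonicity of `e^u S(u)` then removes the smoothing.
-/

section Tauberian

open MeasureTheory Set Topology Asymptotics

/-- The Fejér kernel `(sin (u / 2) / (u / 2)) ^ 2`, with value `1` at `0`, normalised so that it is
the Fourier transform of the triangle function `1 - |t|` on `[-1, 1]`. It is the positive smoothing
kernel of the Tauberian argument. -/
noncomputable def fejerKernel (u : ℝ) : ℝ := Real.sinc (u / 2) ^ 2

lemma fejerKernel_nonneg (u : ℝ) : 0 ≤ fejerKernel u := sq_nonneg _

lemma continuous_fejerKernel : Continuous fejerKernel :=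
  (Real.continuous_sinc.comp (continuous_id.div_const 2)).pow 2

lemma fejerKernel_neg (u : ℝ) : fejerKernel (-u) = fejerKernel u := by
  rw [fejerKernel, fejerKernel, neg_div, Real.sinc_neg]

lemma fejerKernel_of_ne_zero {u : ℝ} (hu : u ≠ 0) :
    fejerKernel u = 2 * (1 - Real.cos u) / u ^ 2 := by
  rw [fejerKernel, Real.sinc_of_ne_zero (by positivity), div_pow, Real.sin_sq_eq_half_sub,
    mul_div_cancel₀ _ two_ne_zero]
  field_simp

lemma fejerKernel_le (u : ℝ) : fejerKernel u ≤ 5 * (1 + u ^ 2)⁻¹ := by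
  have le_one : fejerKernel u ≤ 1 := by
    rw [fejerKernel, ← sq_abs]
    exact pow_le_one₀ (abs_nonneg _) (Real.abs_sinc_le_one _)
  have mul_sq_le : fejerKernel u * u ^ 2 ≤ 4 := by
    rcases eq_or_ne u 0 with rfl | hu
    · simp
    · rw [fejerKernel_of_ne_zero hu, div_mul_cancel₀ _ (by positivity)]
      linarith [Real.neg_one_le_cos u]
  rw [← div_eq_mul_inv, le_div_iff₀ (by positivity)]
  linarith

lemma integrable_fejerKernel : Integrable fejerKernel := by
  refine (integrable_inv_one_add_sq.const_mul 5).mono'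
    continuous_fejerKernel.aestronglyMeasurable (.of_forall fun u ↦ ?_)
  rw [Real.norm_of_nonneg (fejerKernel_nonneg u)]
  exact fejerKernel_le u

lemma integral_fejerKernel_pos : 0 < ∫ u, fejerKernel u := by
  rw [integral_pos_iff_support_of_nonneg fejerKernel_nonneg integrable_fejerKernel]
  exact continuous_fejerKernel.isOpen_support.measure_pos _ ⟨0, by simp [fejerKernel]⟩

lemma integral_one_sub_mul_cos (u : ℝ) :
    ∫ t in (0 : ℝ)..1, (1 - t) * Real.cos (u * t) = fejerKernel u / 2 := by
  rcases eq_or_ne u 0 with rfl | hu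
  · simp only [zero_mul, Real.cos_zero, mul_one, fejerKernel, zero_div, Real.sinc_zero]
    rw [intervalIntegral.integral_sub (by simp) (by simp), integral_id]
    norm_num
  have hderiv (t : ℝ) : HasDerivAt
      (fun t ↦ (1 - t) * (Real.sin (u * t) / u) - Real.cos (u * t) / u ^ 2)
      ((1 - t) * Real.cos (u * t)) t := by
    have hmul : HasDerivAt (fun t : ℝ ↦ u * t) u t := by simpa using (hasDerivAt_id t).const_mul u
    refine ((((hasDerivAt_id t).const_sub 1).mul (hmul.sin.div_const u)).sub
      (hmul.cos.div_const (u ^ 2))).congr_deriv ?_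
    simp only [id]
    field_simp
    ring
  rw [intervalIntegral.integral_eq_sub_of_hasDerivAt (fun t _ ↦ hderiv t)
    (Continuous.intervalIntegrable (by fun_prop) _ _), fejerKernel_of_ne_zero hu]
  simp only [sub_self, zero_mul, mul_one, mul_zero, Real.sin_zero, Real.cos_zero]
  field_simp
  ring

lemma integral_one_sub_abs_mul_cexp (u : ℝ) :
    ∫ t in (-1 : ℝ)..1, ((1 - |t| : ℝ) : ℂ) * Complex.exp (u * t * Complex.I) = fejerKernel u := by
  set f : ℝ → ℂ := fun t ↦ ((1 - |t| : ℝ) : ℂ) * Complex.exp (u * t * Complex.I) with hf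
  have hint (a b : ℝ) : IntervalIntegrable f volume a b :=
    Continuous.intervalIntegrable (by fun_prop) a b
  have fold (t : ℝ) (ht : t ∈ uIcc (0 : ℝ) 1) :
      f (-t) + f t = ((2 * ((1 - t) * Real.cos (u * t)) : ℝ) : ℂ) := by
    rw [uIcc_of_le zero_le_one] at ht
    simp only [hf, abs_neg, abs_of_nonneg ht.1]
    push_cast
    rw [mul_left_comm, Complex.two_cos]
    ring_nf
  have reflect : ∫ t in (-1 : ℝ)..0, f t = ∫ t in (0 : ℝ)..1, f (-t) := by
    rw [intervalIntegral.integral_comp_neg, neg_zero]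
  calc ∫ t in (-1 : ℝ)..1, f t
      = ∫ t in (0 : ℝ)..1, (f (-t) + f t) := by
        rw [← intervalIntegral.integral_add_adjacent_intervals (hint (-1) 0) (hint 0 1), reflect,
          ← intervalIntegral.integral_add (Continuous.intervalIntegrable (by fun_prop) 0 1)
            (hint 0 1)]
    _ = ((2 * (fejerKernel u / 2) : ℝ) : ℂ) := by
        rw [intervalIntegral.integral_congr fold, intervalIntegral.integral_ofReal,
          intervalIntegral.integral_const_mul, integral_one_sub_mul_cos]
    _ = fejerKernel u := by rw [mul_div_cancel₀ _ two_ne_zero]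

/-- The Laplace transform `∫₀^∞ h(u) e^{-zu} du`. -/
noncomputable def laplaceTransform (h : ℝ → ℝ) (z : ℂ) : ℂ :=
  ∫ u in Ioi (0 : ℝ), (h u : ℂ) * Complex.exp (-z * u)

lemma laplaceTransform_comp_div (h : ℝ → ℝ) {l : ℝ} (hl : 0 < l) (z : ℂ) :
    laplaceTransform (fun u ↦ h (u / l)) z = l * laplaceTransform h (l * z) := by
  have hscale := integral_comp_mul_left_Ioi'
    (fun x : ℝ ↦ (h (x / l) : ℂ) * Complex.exp (-z * x)) 0 hl
  rw [mul_zero] at hscale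
  simp only [laplaceTransform, ← hscale, Complex.real_smul, mul_div_cancel_left₀ _ hl.ne']
  refine congrArg _ (integral_congr_ae (.of_forall fun u ↦ ?_))
  push_cast
  ring_nf

section Bounded

variable {h : ℝ → ℝ} {M : ℝ}

lemma integrableOn_mul_cexp_neg_mul (hm : Measurable h) (hb : ∀ u, |h u| ≤ M) {z : ℂ}
    (hz : 0 < z.re) :
    IntegrableOn (fun u : ℝ ↦ (h u : ℂ) * Complex.exp (-z * u)) (Ioi 0) := by
  refine (integrableOn_exp_mul_complex_Ioi (a := -z) (by simpa using hz) 0).bdd_mul (c := M)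
    (Complex.measurable_ofReal.comp hm).aestronglyMeasurable (.of_forall fun u ↦ ?_)
  simpa using hb u

lemma laplaceTransform_sub_const (hm : Measurable h) (hb : ∀ u, |h u| ≤ M) (c : ℝ) {z : ℂ}
    (hz : 0 < z.re) :
    laplaceTransform (fun u ↦ h u - c) z = laplaceTransform h z - c / z := by
  have hz' : (-z).re < 0 := by simpa using hz
  simp only [laplaceTransform, Complex.ofReal_sub, sub_mul]
  rw [integral_sub (integrableOn_mul_cexp_neg_mul hm hb hz)
    ((integrableOn_exp_mul_complex_Ioi hz' 0).const_mul _), integral_const_mul,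
    integral_exp_mul_complex_Ioi hz']
  simp [div_eq_mul_inv]

lemma integrable_mul_fejerKernel (hm : Measurable h) (hb : ∀ u, |h u| ≤ M) :
    Integrable fun u ↦ h u * fejerKernel u :=
  integrable_fejerKernel.bdd_mul hm.aestronglyMeasurable (.of_forall hb)

lemma integrable_triangle_mul_laplace_kernel (hm : Measurable h) (hb : ∀ u, |h u| ≤ M) {δ : ℝ}
    (hδ : 0 < δ) (y : ℝ) :
    Integrable (Function.uncurry fun t u : ℝ ↦
        ((1 - |t| : ℝ) : ℂ) * Complex.exp (y * t * Complex.I) *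
          ((h u : ℂ) * Complex.exp (-(δ + t * Complex.I) * u)))
      ((volume.restrict (Ioc (-1) 1)).prod (volume.restrict (Ioi 0))) := by
  have hconst : Integrable (fun _ : ℝ ↦ (1 : ℝ)) (volume.restrict (Ioc (-1) 1)) :=
    integrable_const _
  have hexp : Integrable (fun u : ℝ ↦ M * Real.exp (-δ * u)) (volume.restrict (Ioi 0)) :=
    (integrableOn_exp_mul_Ioi (by linarith) 0).const_mul M
  refine (hconst.mul_prod hexp).mono' ?_ ?_
  · refine Measurable.aestronglyMeasurable ?_
    unfold Function.uncurry
    fun_prop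
  rw [Measure.prod_restrict]
  filter_upwards [ae_restrict_mem (measurableSet_Ioc.prod measurableSet_Ioi)] with ⟨t, u⟩ ⟨ht, _⟩
  have htriangle : |(1 - |t|)| ≤ 1 := by
    have : |t| ≤ 1 := abs_le.2 ⟨ht.1.le, ht.2⟩
    rw [abs_of_nonneg (by linarith)]
    linarith [abs_nonneg t]
  calc ‖((1 - |t| : ℝ) : ℂ) * Complex.exp (y * t * Complex.I) *
          ((h u : ℂ) * Complex.exp (-(δ + t * Complex.I) * u))‖
      = |(1 - |t|)| * (|h u| * Real.exp (-δ * u)) := by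
        simp only [norm_mul, Complex.norm_real, Complex.norm_exp, Real.norm_eq_abs]
        simp
    _ ≤ 1 * (M * Real.exp (-δ * u)) := by
        gcongr
        exact hb u

lemma integral_mul_exp_mul_fejerKernel (hm : Measurable h) (hb : ∀ u, |h u| ≤ M) {δ : ℝ}
    (hδ : 0 < δ) (y : ℝ) :
    ((∫ u in Ioi (0 : ℝ), h u * Real.exp (-δ * u) * fejerKernel (u - y) : ℝ) : ℂ) =
      ∫ t in (-1 : ℝ)..1, ((1 - |t| : ℝ) : ℂ) * Complex.exp (y * t * Complex.I) *
        laplaceTransform h (δ + t * Complex.I) := by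
  have inner (u : ℝ) :
      ∫ t in (-1 : ℝ)..1, ((1 - |t| : ℝ) : ℂ) * Complex.exp (y * t * Complex.I) *
          ((h u : ℂ) * Complex.exp (-(δ + t * Complex.I) * u)) =
        ((h u * Real.exp (-δ * u) * fejerKernel (u - y) : ℝ) : ℂ) := by
    rw [← fejerKernel_neg, neg_sub, Complex.ofReal_mul, ← integral_one_sub_abs_mul_cexp,
      ← intervalIntegral.integral_const_mul]
    refine intervalIntegral.integral_congr fun t _ ↦ ?_
    have hexp : Complex.exp (y * t * Complex.I) * Complex.exp (-(δ + t * Complex.I) * u) =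
        Complex.exp (-δ * u) * Complex.exp ((y - u : ℝ) * t * Complex.I) := by
      rw [← Complex.exp_add, ← Complex.exp_add]
      push_cast
      ring_nf
    push_cast at hexp ⊢
    linear_combination (1 - (|t| : ℝ)) * h u * hexp
  simp_rw [laplaceTransform, ← integral_const_mul]
  rw [intervalIntegral.integral_of_le (by norm_num),
    integral_integral_swap (integrable_triangle_mul_laplace_kernel hm hb hδ y),
    ← integral_complex_ofReal]
  simp_rw [← inner, intervalIntegral.integral_of_le (show (-1 : ℝ) ≤ 1 by norm_num)]

lemma tendsto_integral_mul_exp_mul_fejerKernel (hm : Measurable h) (hb : ∀ u, |h u| ≤ M) (y : ℝ) :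
    Tendsto (fun δ : ℝ ↦ ∫ u in Ioi (0 : ℝ), h u * Real.exp (-δ * u) * fejerKernel (u - y))
      (𝓝[>] 0) (𝓝 (∫ u in Ioi (0 : ℝ), h u * fejerKernel (u - y))) := by
  refine tendsto_integral_filter_of_dominated_convergence (fun u ↦ M * fejerKernel (u - y))
    (.of_forall fun δ ↦ ?_) ?_ ?_ (.of_forall fun u ↦ ?_)
  · have := continuous_fejerKernel.measurable
    exact Measurable.aestronglyMeasurable (by fun_prop)
  · filter_upwards [self_mem_nhdsWithin] with δ (hδ : 0 < δ)
    filter_upwards [ae_restrict_mem measurableSet_Ioi] with u (hu : 0 < u)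
    rw [norm_mul, norm_mul, Real.norm_of_nonneg (fejerKernel_nonneg _),
      Real.norm_of_nonneg (Real.exp_pos _).le]
    refine mul_le_mul_of_nonneg_right ?_ (fejerKernel_nonneg _)
    have : Real.exp (-δ * u) ≤ 1 := Real.exp_le_one_iff.2 (by nlinarith)
    exact (mul_le_of_le_one_right (norm_nonneg _) this).trans (hb u)
  · exact ((integrable_fejerKernel.comp_sub_right y).const_mul M).integrableOn
  · have : Continuous fun δ : ℝ ↦ h u * Real.exp (-δ * u) * fejerKernel (u - y) := by fun_prop
    simpa using (this.tendsto 0).mono_left nhdsWithin_le_nhds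

end Bounded

lemma tendsto_intervalIntegral_mul_add_mul_I {a b : ℝ} {w : ℝ → ℂ} (hw : Continuous w) {G : ℂ → ℂ}
    (hG : ContinuousOn G {z | 0 ≤ z.re}) :
    Tendsto (fun δ : ℝ ↦ ∫ t in a..b, w t * G (δ + t * Complex.I)) (𝓝[>] 0)
      (𝓝 (∫ t in a..b, w t * G (t * Complex.I))) := by
  have hcont : ContinuousOn (fun p : ℝ × ℝ ↦ w p.2 * G (p.1 + p.2 * Complex.I))
      (Icc 0 1 ×ˢ uIcc a b) := by
    refine (hw.comp continuous_snd).continuousOn.mul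
      (hG.comp (Continuous.continuousOn (by fun_prop)) ?_)
    rintro ⟨δ, t⟩ ⟨hδ, -⟩
    simpa using hδ.1
  have hstrip : ∀ᶠ δ : ℝ in 𝓝[>] 0, δ ∈ Icc (0 : ℝ) 1 := by
    filter_upwards [Ioc_mem_nhdsGT (zero_lt_one (α := ℝ))] with δ hδ using ⟨hδ.1.le, hδ.2⟩
  obtain ⟨B, hB⟩ := (isCompact_Icc.prod isCompact_uIcc).exists_bound_of_continuousOn hcont
  refine intervalIntegral.tendsto_integral_filter_of_dominated_convergence (fun _ ↦ B)
    ?_ ?_ (by simp) (.of_forall fun t _ ↦ ?_)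
  · filter_upwards [hstrip] with δ hδ
    exact (hcont.comp (f := fun t : ℝ ↦ (δ, t)) (Continuous.continuousOn (by fun_prop))
      fun t ht ↦ ⟨hδ, uIoc_subset_uIcc ht⟩).aestronglyMeasurable measurableSet_uIoc
  · filter_upwards [hstrip] with δ hδ
    exact .of_forall fun t ht ↦ hB (δ, t) ⟨hδ, uIoc_subset_uIcc ht⟩
  · refine ((hG (t * Complex.I) (by simp)).tendsto.comp
      (tendsto_nhdsWithin_iff.2 ⟨?_, ?_⟩)).const_mul _
    · have : Continuous fun δ : ℝ ↦ (δ : ℂ) + t * Complex.I := by fun_prop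
      simpa using (this.tendsto 0).mono_left nhdsWithin_le_nhds
    · filter_upwards [self_mem_nhdsWithin] with δ (hδ : 0 < δ)
      simpa using hδ.le

lemma tendsto_intervalIntegral_mul_cexp_atTop {a b : ℝ} (hab : a ≤ b) (w : ℝ → ℂ) :
    Tendsto (fun y : ℝ ↦ ∫ t in a..b, w t * Complex.exp (y * t * Complex.I)) atTop (𝓝 0) := by
  have hfreq : Tendsto (fun y : ℝ ↦ -y / (2 * Real.pi)) atTop (cocompact ℝ) :=
    (tendsto_neg_atTop_atBot.atBot_div_const (by positivity)).mono_right atBot_le_cocompact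
  refine ((Real.tendsto_integral_exp_smul_cocompact ((Ioc a b).indicator w)).comp hfreq).congr
    fun y ↦ ?_
  rw [intervalIntegral.integral_of_le hab, ← integral_indicator measurableSet_Ioc]
  refine integral_congr_ae (.of_forall fun t ↦ ?_)
  have hphase : 2 * Real.pi * -(t * (-y / (2 * Real.pi))) = y * t := by field_simp
  by_cases ht : t ∈ Ioc a b
  · simp only [indicator_of_mem ht, Circle.smul_def, Real.fourierChar_apply, hphase, smul_eq_mul]
    push_cast
    ring
  · simp only [indicator_of_notMem ht, smul_zero]

section LaplaceBoundary

variable {h : ℝ → ℝ} {M : ℝ} {G : ℂ → ℂ}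

lemma integral_mul_fejerKernel_eq_of_laplaceTransform_eq (hm : Measurable h)
    (hb : ∀ u, |h u| ≤ M) (hG : ContinuousOn G {z | 0 ≤ z.re})
    (hLG : EqOn (laplaceTransform h) G {z | 0 < z.re}) (y : ℝ) :
    ((∫ u in Ioi (0 : ℝ), h u * fejerKernel (u - y) : ℝ) : ℂ) =
      ∫ t in (-1 : ℝ)..1, ((1 - |t| : ℝ) : ℂ) * Complex.exp (y * t * Complex.I) *
        G (t * Complex.I) := by
  refine tendsto_nhds_unique ((Complex.continuous_ofReal.tendsto _).comp
    (tendsto_integral_mul_exp_mul_fejerKernel hm hb y))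
    ((tendsto_intervalIntegral_mul_add_mul_I (by fun_prop) hG).congr' ?_)
  filter_upwards [self_mem_nhdsWithin] with δ (hδ : 0 < δ)
  rw [Function.comp_apply, integral_mul_exp_mul_fejerKernel hm hb hδ]
  refine intervalIntegral.integral_congr fun t _ ↦ ?_
  rw [hLG (show 0 < ((δ : ℂ) + t * Complex.I).re by simpa using hδ)]

lemma tendsto_setIntegral_Ioi_mul_fejerKernel (hm : Measurable h) (hb : ∀ u, |h u| ≤ M)
    (hG : ContinuousOn G {z | 0 ≤ z.re}) (hLG : EqOn (laplaceTransform h) G {z | 0 < z.re}) :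
    Tendsto (fun y : ℝ ↦ ∫ u in Ioi (0 : ℝ), h u * fejerKernel (u - y)) atTop (𝓝 0) := by
  have hlim := tendsto_intervalIntegral_mul_cexp_atTop (a := -1) (b := 1) (by norm_num)
    fun t ↦ ((1 - |t| : ℝ) : ℂ) * G (t * Complex.I)
  refine ((Complex.continuous_re.tendsto 0).comp hlim).congr fun y ↦ ?_
  rw [Function.comp_apply, ← Complex.ofReal_re (∫ u in Ioi (0 : ℝ), h u * fejerKernel (u - y)),
    integral_mul_fejerKernel_eq_of_laplaceTransform_eq hm hb hG hLG]
  simp only [mul_right_comm]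

lemma tendsto_setIntegral_Iic_mul_fejerKernel (hm : Measurable h) (hb : ∀ u, |h u| ≤ M) :
    Tendsto (fun y : ℝ ↦ ∫ u in Iic (0 : ℝ), h u * fejerKernel (u - y)) atTop (𝓝 0) := by
  have hshift (y : ℝ) : ∫ u in Iic (0 : ℝ), h u * fejerKernel (u - y) =
      ∫ v, (Iic (-y)).indicator (fun v ↦ h (v + y) * fejerKernel v) v := by
    rw [← integral_indicator measurableSet_Iic,
      ← integral_add_right_eq_self _ y]
    refine integral_congr_ae (.of_forall fun v ↦ ?_)
    simp [indicator_apply, le_neg_iff_add_nonpos_right]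
  simp_rw [hshift]
  rw [← integral_zero ℝ ℝ]
  refine tendsto_integral_filter_of_dominated_convergence (fun v ↦ M * fejerKernel v)
    (.of_forall fun y ↦ ?_) (.of_forall fun y ↦ .of_forall fun v ↦ ?_)
    (integrable_fejerKernel.const_mul M) (.of_forall fun v ↦ ?_)
  · have := continuous_fejerKernel.measurable
    exact (Measurable.indicator (by fun_prop) measurableSet_Iic).aestronglyMeasurable
  · refine (norm_indicator_le_norm_self _ _).trans ?_
    rw [norm_mul, Real.norm_of_nonneg (fejerKernel_nonneg v)]
    exact mul_le_mul_of_nonneg_right (hb _) (fejerKernel_nonneg v)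
  · refine tendsto_const_nhds.congr' ?_
    filter_upwards [eventually_gt_atTop (-v)] with y hy
    rw [indicator_of_notMem (by simpa using by linarith)]

lemma tendsto_integral_add_mul_fejerKernel (hm : Measurable h) (hb : ∀ u, |h u| ≤ M)
    (hG : ContinuousOn G {z | 0 ≤ z.re}) (hLG : EqOn (laplaceTransform h) G {z | 0 < z.re}) :
    Tendsto (fun y : ℝ ↦ ∫ v, h (y + v) * fejerKernel v) atTop (𝓝 0) := by
  have hsplit (y : ℝ) : (∫ u in Iic (0 : ℝ), h u * fejerKernel (u - y)) +
      ∫ u in Ioi (0 : ℝ), h u * fejerKernel (u - y) = ∫ v, h (y + v) * fejerKernel v := by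
    have hint : Integrable fun u ↦ h u * fejerKernel (u - y) :=
      (integrable_fejerKernel.comp_sub_right y).bdd_mul hm.aestronglyMeasurable (.of_forall hb)
    rw [← compl_Iic, integral_add_compl measurableSet_Iic hint,
      ← integral_add_left_eq_self _ y]
    simp
  simpa only [hsplit, add_zero] using (tendsto_setIntegral_Iic_mul_fejerKernel hm hb).add
    (tendsto_setIntegral_Ioi_mul_fejerKernel hm hb hG hLG)

lemma tendsto_integral_add_div_mul_fejerKernel (hm : Measurable h) (hb : ∀ u, |h u| ≤ M)
    (hG : ContinuousOn G {z | 0 ≤ z.re}) (hLG : EqOn (laplaceTransform h) G {z | 0 < z.re})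
    {l : ℝ} (hl : 0 < l) :
    Tendsto (fun y : ℝ ↦ ∫ v, h (y + v / l) * fejerKernel v) atTop (𝓝 0) := by
  have hGl : ContinuousOn (fun z : ℂ ↦ l * G (l * z)) {z | 0 ≤ z.re} :=
    continuousOn_const.mul (hG.comp (Continuous.continuousOn (by fun_prop)) fun z hz ↦ by
      simpa using mul_nonneg hl.le hz)
  have hLGl : EqOn (laplaceTransform fun u ↦ h (u / l)) (fun z : ℂ ↦ l * G (l * z))
      {z | 0 < z.re} := fun z hz ↦ by
    have hlz : 0 < ((l : ℂ) * z).re := by simpa using mul_pos hl hz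
    rw [laplaceTransform_comp_div h hl, hLG hlz]
  have hlim := (tendsto_integral_add_mul_fejerKernel (h := fun u ↦ h (u / l)) (by fun_prop)
    (fun u ↦ hb _) hGl hLGl).comp (tendsto_id.const_mul_atTop hl)
  refine hlim.congr fun y ↦ ?_
  simp [add_div, mul_div_cancel_left₀ _ hl.ne']

end LaplaceBoundary

section SlowlyDecreasing

variable {S : ℝ → ℝ} {M c : ℝ} {G : ℂ → ℂ}

lemma le_mul_exp_of_monotone_mul_exp (h0 : ∀ u, 0 ≤ S u)
    (hmono : Monotone fun u ↦ S u * Real.exp u) {u v d : ℝ} (huv : u ≤ v) (hd : v - u ≤ d) :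
    S u ≤ S v * Real.exp d :=
  calc S u ≤ S v * Real.exp (v - u) := by
        rw [Real.exp_sub, ← mul_div_assoc, le_div_iff₀ (Real.exp_pos _)]
        exact hmono huv
    _ ≤ S v * Real.exp d := mul_le_mul_of_nonneg_left (Real.exp_le_exp.2 hd) (h0 v)

lemma measurable_of_monotone_mul_exp (hmono : Monotone fun u ↦ S u * Real.exp u) :
    Measurable S := by
  have hS : S = fun u ↦ S u * Real.exp u * Real.exp (-u) := by
    ext u
    rw [mul_assoc, ← Real.exp_add, add_neg_cancel, Real.exp_zero, mul_one]
  rw [hS]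
  exact hmono.measurable.mul (by fun_prop)

lemma integrable_add_div_mul_fejerKernel (hm : Measurable S) (h0 : ∀ u, 0 ≤ S u)
    (hb : ∀ u, S u ≤ M) (y l : ℝ) : Integrable fun v ↦ S (y + v / l) * fejerKernel v :=
  integrable_mul_fejerKernel (h := fun v ↦ S (y + v / l)) (by fun_prop) fun v ↦ by
    rw [abs_of_nonneg (h0 _)]
    exact hb _

lemma mem_Icc_add_div_of_mem_Ioc {l η v : ℝ} (hl : 0 < l) (hv : v ∈ Ioc (-(l * η)) (l * η))
    (y : ℝ) : y + v / l ∈ Icc (y - η) (y + η) := by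
  have hlow : -η ≤ v / l := by
    rw [le_div_iff₀ hl]
    linarith [hv.1]
  have hupp : v / l ≤ η := by
    rw [div_le_iff₀ hl]
    linarith [hv.2]
  constructor <;> linarith

lemma mul_integral_fejerKernel_le (h0 : ∀ u, 0 ≤ S u) (hb : ∀ u, S u ≤ M)
    (hmono : Monotone fun u ↦ S u * Real.exp u) {l η : ℝ} (hl : 0 < l) (hη : 0 ≤ η) (y : ℝ) :
    S (y - η) * ∫ v in -(l * η)..l * η, fejerKernel v ≤
      Real.exp (2 * η) * ∫ v, S (y + v / l) * fejerKernel v := by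
  have hint := (integrable_add_div_mul_fejerKernel (measurable_of_monotone_mul_exp hmono) h0 hb y
    l).const_mul (Real.exp (2 * η))
  rw [intervalIntegral.integral_of_le (by nlinarith), ← integral_const_mul, ← integral_const_mul]
  calc ∫ v in Ioc (-(l * η)) (l * η), S (y - η) * fejerKernel v
      ≤ ∫ v in Ioc (-(l * η)) (l * η), Real.exp (2 * η) * (S (y + v / l) * fejerKernel v) := by
        refine setIntegral_mono_on (integrable_fejerKernel.const_mul _).integrableOn
          hint.integrableOn measurableSet_Ioc fun v hv ↦ ?_
        obtain ⟨hlow, hupp⟩ := mem_Icc_add_div_of_mem_Ioc hl hv y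
        rw [← mul_assoc, mul_comm (Real.exp _)]
        exact mul_le_mul_of_nonneg_right
          (le_mul_exp_of_monotone_mul_exp h0 hmono hlow (by linarith)) (fejerKernel_nonneg v)
    _ ≤ ∫ v, Real.exp (2 * η) * (S (y + v / l) * fejerKernel v) :=
        setIntegral_le_integral hint (.of_forall fun v ↦
          mul_nonneg (Real.exp_pos _).le (mul_nonneg (h0 _) (fejerKernel_nonneg v)))

lemma integral_add_div_mul_fejerKernel_le (h0 : ∀ u, 0 ≤ S u) (hb : ∀ u, S u ≤ M)
    (hmono : Monotone fun u ↦ S u * Real.exp u) {l η : ℝ} (hl : 0 < l) (hη : 0 ≤ η) (y : ℝ) :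
    ∫ v, S (y + v / l) * fejerKernel v ≤
      S (y + η) * Real.exp (2 * η) * (∫ v in -(l * η)..l * η, fejerKernel v) +
        M * ((∫ v, fejerKernel v) - ∫ v in -(l * η)..l * η, fejerKernel v) := by
  have hint := integrable_add_div_mul_fejerKernel (measurable_of_monotone_mul_exp hmono) h0 hb y l
  rw [intervalIntegral.integral_of_le (by nlinarith),
    ← setIntegral_compl measurableSet_Ioc integrable_fejerKernel,
    ← integral_add_compl (s := Ioc (-(l * η)) (l * η)) measurableSet_Ioc hint,
    ← integral_const_mul, ← integral_const_mul]
  refine add_le_add ?_ ?_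
  · refine setIntegral_mono_on hint.integrableOn
      (integrable_fejerKernel.const_mul _).integrableOn measurableSet_Ioc fun v hv ↦ ?_
    obtain ⟨hlow, hupp⟩ := mem_Icc_add_div_of_mem_Ioc hl hv y
    exact mul_le_mul_of_nonneg_right
      (le_mul_exp_of_monotone_mul_exp h0 hmono hupp (by linarith)) (fejerKernel_nonneg v)
  · exact setIntegral_mono hint.integrableOn (integrable_fejerKernel.const_mul _).integrableOn
      fun v ↦ mul_le_mul_of_nonneg_right (hb _) (fejerKernel_nonneg v)

lemma tendsto_intervalIntegral_fejerKernel :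
    Tendsto (fun T : ℝ ↦ ∫ v in -T..T, fejerKernel v) atTop (𝓝 (∫ v, fejerKernel v)) :=
  intervalIntegral_tendsto_integral integrable_fejerKernel tendsto_neg_atTop_atBot tendsto_id

lemma tendsto_exp_two_mul_inv_atTop :
    Tendsto (fun m : ℝ ↦ Real.exp (2 * m⁻¹)) atTop (𝓝 1) := by
  simpa [Function.comp_def] using
    (Real.continuous_exp.tendsto _).comp (tendsto_inv_atTop_zero.const_mul 2)

-- Both comparisons use the window `|u - y| ≤ η = 1 / m` and the kernel dilated by `l = m ^ 2`, so
-- that the window shrinks while the kernel mass `∫ v in -m..m, fejerKernel v` inside it becomes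
-- full.
lemma eventually_lt_of_tendsto_integral_fejerKernel (h0 : ∀ u, 0 ≤ S u) (hb : ∀ u, S u ≤ M)
    (hmono : Monotone fun u ↦ S u * Real.exp u)
    (hlim : ∀ l : ℝ, 0 < l → Tendsto (fun y ↦ ∫ v, S (y + v / l) * fejerKernel v) atTop
      (𝓝 (c * ∫ v, fejerKernel v)))
    {b : ℝ} (hcb : c < b) : ∀ᶠ y in atTop, S y < b := by
  have hparam := (tendsto_exp_two_mul_inv_atTop.mul_const (c * ∫ v, fejerKernel v)).eventually_lt
    (tendsto_intervalIntegral_fejerKernel.const_mul b)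
    (by rw [one_mul]; exact mul_lt_mul_of_pos_right hcb integral_fejerKernel_pos)
  obtain ⟨m, hm, hmass, hm0⟩ := (hparam.and
    ((tendsto_intervalIntegral_fejerKernel.eventually_const_lt integral_fejerKernel_pos).and
      (eventually_gt_atTop 0))).exists
  have hshift : Tendsto (fun y : ℝ ↦ y + m⁻¹) atTop atTop :=
    tendsto_atTop_add_const_right _ _ tendsto_id
  filter_upwards [hshift.eventually
    (((hlim (m ^ 2) (by positivity)).const_mul _).eventually_lt_const hm)] with y hy
  have hle := mul_integral_fejerKernel_le h0 hb hmono (l := m ^ 2) (η := m⁻¹) (by positivity)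
    (by positivity) (y + m⁻¹)
  rw [show m ^ 2 * m⁻¹ = m by field_simp, add_sub_cancel_right] at hle
  exact lt_of_mul_lt_mul_right (hle.trans_lt hy) hmass.le

lemma eventually_gt_of_tendsto_integral_fejerKernel (h0 : ∀ u, 0 ≤ S u) (hb : ∀ u, S u ≤ M)
    (hmono : Monotone fun u ↦ S u * Real.exp u)
    (hlim : ∀ l : ℝ, 0 < l → Tendsto (fun y ↦ ∫ v, S (y + v / l) * fejerKernel v) atTop
      (𝓝 (c * ∫ v, fejerKernel v)))
    {b : ℝ} (hbc : b < c) : ∀ᶠ y in atTop, b < S y := by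
  have hparam := (((tendsto_exp_two_mul_inv_atTop.const_mul b).mul
      tendsto_intervalIntegral_fejerKernel).add
    ((tendsto_intervalIntegral_fejerKernel.const_sub _).const_mul M)).eventually_lt_const
    (show b * 1 * (∫ v, fejerKernel v) + M * ((∫ v, fejerKernel v) - ∫ v, fejerKernel v) <
        c * ∫ v, fejerKernel v by
      rw [mul_one, sub_self, mul_zero, add_zero]
      exact mul_lt_mul_of_pos_right hbc integral_fejerKernel_pos)
  obtain ⟨m, hm, hmass, hm0⟩ := (hparam.and
    ((tendsto_intervalIntegral_fejerKernel.eventually_const_lt integral_fejerKernel_pos).and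
      (eventually_gt_atTop 0))).exists
  have hshift : Tendsto (fun y : ℝ ↦ y - m⁻¹) atTop atTop :=
    tendsto_atTop_add_const_right _ _ tendsto_id
  filter_upwards [hshift.eventually
    ((hlim (m ^ 2) (by positivity)).eventually_const_lt hm)] with y hy
  have hle := integral_add_div_mul_fejerKernel_le h0 hb hmono (l := m ^ 2) (η := m⁻¹)
    (by positivity) (by positivity) (y - m⁻¹)
  rw [show m ^ 2 * m⁻¹ = m by field_simp, sub_add_cancel] at hle
  have hlt := lt_of_mul_lt_mul_right (lt_of_add_lt_add_right (hy.trans_le hle)) hmass.le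
  exact lt_of_mul_lt_mul_right hlt (Real.exp_pos _).le

theorem tendsto_of_laplaceTransform_sub_const_eq (h0 : ∀ u, 0 ≤ S u) (hb : ∀ u, S u ≤ M)
    (hmono : Monotone fun u ↦ S u * Real.exp u) (hG : ContinuousOn G {z | 0 ≤ z.re})
    (hLG : EqOn (laplaceTransform fun u ↦ S u - c) G {z | 0 < z.re}) :
    Tendsto S atTop (𝓝 c) := by
  have hm := measurable_of_monotone_mul_exp hmono
  have hdiff (u : ℝ) : |S u - c| ≤ M + |c| :=
    (abs_sub _ _).trans (add_le_add_left ((abs_of_nonneg (h0 u)).trans_le (hb u)) _)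
  have hlim (l : ℝ) (hl : 0 < l) : Tendsto (fun y ↦ ∫ v, S (y + v / l) * fejerKernel v) atTop
      (𝓝 (c * ∫ v, fejerKernel v)) := by
    have hzero := tendsto_integral_add_div_mul_fejerKernel (by fun_prop) hdiff hG hLG hl
    simp_rw [sub_mul] at hzero
    simp_rw [fun y ↦ integral_sub (integrable_add_div_mul_fejerKernel hm h0 hb y l)
      (integrable_fejerKernel.const_mul c), integral_const_mul] at hzero
    simpa using hzero.add_const (c * ∫ v, fejerKernel v)
  exact tendsto_order.2
    ⟨fun _ ↦ eventually_gt_of_tendsto_integral_fejerKernel h0 hb hmono hlim,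
      fun _ ↦ eventually_lt_of_tendsto_integral_fejerKernel h0 hb hmono hlim⟩

end SlowlyDecreasing

section WienerIkehara

/-- The normalised summatory function `e^{-u} ∑_{n ≤ e^u} f(n)` in the logarithmic variable `u`. -/
noncomputable def expMeanSum (f : ℕ → ℝ) (u : ℝ) : ℝ :=
  (∑ n ∈ Finset.Icc 1 ⌊Real.exp u⌋₊, f n) * Real.exp (-u)

variable {f : ℕ → ℝ} {K c : ℝ} {G : ℂ → ℂ}

lemma expMeanSum_nonneg (hf : ∀ n, 0 ≤ f n) (u : ℝ) : 0 ≤ expMeanSum f u :=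
  mul_nonneg (Finset.sum_nonneg fun n _ ↦ hf n) (Real.exp_pos _).le

lemma expMeanSum_le (hK : 0 ≤ K) (hsum : ∀ N : ℕ, ∑ n ∈ Finset.Icc 1 N, f n ≤ K * N) (u : ℝ) :
    expMeanSum f u ≤ K := by
  rw [expMeanSum, Real.exp_neg, ← div_eq_mul_inv, div_le_iff₀ (Real.exp_pos _)]
  exact (hsum _).trans (mul_le_mul_of_nonneg_left (Nat.floor_le (Real.exp_pos _).le) hK)

lemma expMeanSum_mul_exp (f : ℕ → ℝ) (u : ℝ) :
    expMeanSum f u * Real.exp u = ∑ n ∈ Finset.Icc 1 ⌊Real.exp u⌋₊, f n := by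
  rw [expMeanSum, mul_assoc, ← Real.exp_add, neg_add_cancel, Real.exp_zero, mul_one]

lemma monotone_expMeanSum_mul_exp (hf : ∀ n, 0 ≤ f n) :
    Monotone fun u ↦ expMeanSum f u * Real.exp u := fun u v huv ↦ by
  simp only [expMeanSum_mul_exp]
  exact Finset.sum_le_sum_of_subset_of_nonneg
    (Finset.Icc_subset_Icc_right (Nat.floor_mono (Real.exp_le_exp.2 huv))) fun n _ _ ↦ hf n

lemma expMeanSum_log_natCast (f : ℕ → ℝ) {N : ℕ} (hN : 0 < N) :
    expMeanSum f (Real.log N) = (∑ n ∈ Finset.Icc 1 N, f n) / N := by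
  rw [expMeanSum, Real.exp_neg, Real.exp_log (Nat.cast_pos.2 hN), Nat.floor_natCast,
    div_eq_mul_inv]

lemma LSeries_one_add_eq_mul_laplaceTransform_expMeanSum (hf : ∀ n, 0 ≤ f n)
    (hsum : ∀ N : ℕ, ∑ n ∈ Finset.Icc 1 N, f n ≤ K * N) {z : ℂ} (hz : 0 < z.re) :
    LSeries (fun n ↦ f n) (1 + z) = (1 + z) * laplaceTransform (expMeanSum f) z := by
  have hO : (fun N : ℕ ↦ ∑ n ∈ Finset.Icc 1 N, f n) =O[atTop] fun N : ℕ ↦ (N : ℝ) ^ (1 : ℝ) := by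
    refine .of_bound K (.of_forall fun N ↦ ?_)
    rw [Real.norm_of_nonneg (Finset.sum_nonneg fun n _ ↦ hf n), Real.rpow_one, Real.norm_natCast]
    exact hsum N
  have hsubst := integral_image_eq_integral_abs_deriv_smul (measurableSet_Ioi (a := (0 : ℝ)))
    (fun x _ ↦ (Real.hasDerivAt_exp x).hasDerivWithinAt) Real.exp_injective.injOn
    fun t : ℝ ↦ (∑ n ∈ Finset.Icc 1 ⌊t⌋₊, (f n : ℂ)) * (t : ℂ) ^ (-((1 + z) + 1))
  rw [Real.image_exp_Ioi, Real.exp_zero] at hsubst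
  rw [LSeries_eq_mul_integral_of_nonneg f zero_le_one (by simpa using hz) hO hf, hsubst]
  refine congrArg _ (integral_congr_ae (.of_forall fun u ↦ ?_))
  have hpow : (Real.exp u : ℂ) * (Real.exp u : ℂ) ^ (-((1 + z) + 1)) =
      Complex.exp (-u) * Complex.exp (-z * u) := by
    rw [Complex.ofReal_exp, Complex.cpow_def_of_ne_zero (Complex.exp_ne_zero _),
      ← Complex.ofReal_exp, ← Complex.ofReal_log (Real.exp_pos u).le, Real.log_exp,
      Complex.ofReal_exp, ← Complex.exp_add, ← Complex.exp_add]
    ring_nf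
  simp only [abs_of_pos (Real.exp_pos u), Complex.real_smul, expMeanSum]
  push_cast at hpow ⊢
  linear_combination (∑ n ∈ Finset.Icc 1 ⌊Real.exp u⌋₊, (f n : ℂ)) * hpow

lemma one_add_ne_zero_of_re_nonneg {z : ℂ} (hz : 0 ≤ z.re) : 1 + z ≠ 0 := fun h ↦ by
  have hre := congrArg Complex.re h
  rw [Complex.add_re, Complex.one_re, Complex.zero_re] at hre
  linarith

theorem tendsto_sum_div_of_eqOn_LSeries_sub (hf : ∀ n, 0 ≤ f n)
    (hsum : ∀ N : ℕ, ∑ n ∈ Finset.Icc 1 N, f n ≤ K * N) (hG : ContinuousOn G {s | 1 ≤ s.re})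
    (hLG : EqOn G (fun s ↦ LSeries (fun n ↦ f n) s - c / (s - 1)) {s | 1 < s.re}) :
    Tendsto (fun N : ℕ ↦ (∑ n ∈ Finset.Icc 1 N, f n) / (N : ℝ)) atTop (𝓝 c) := by
  have hK : 0 ≤ K := (hf 1).trans (by simpa using hsum 1)
  have hmono := monotone_expMeanSum_mul_exp hf
  have hmean : Tendsto (expMeanSum f) atTop (𝓝 c) := by
    refine tendsto_of_laplaceTransform_sub_const_eq (G := fun z ↦ (G (1 + z) - c) / (1 + z))
      (expMeanSum_nonneg hf) (expMeanSum_le hK hsum) hmono ?_ fun z (hz : 0 < z.re) ↦ ?_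
    · refine ContinuousOn.div (.sub (hG.comp (by fun_prop) fun z (hz : 0 ≤ z.re) ↦ ?_)
        continuousOn_const) (by fun_prop) fun z ↦ one_add_ne_zero_of_re_nonneg
      simpa using hz
    · have hz0 : z ≠ 0 := fun h ↦ by simp [h] at hz
      have hz1 := one_add_ne_zero_of_re_nonneg hz.le
      have hG1 : G (1 + z) = (1 + z) * laplaceTransform (expMeanSum f) z - c / z := by
        simp only [hLG (show 1 < (1 + z).re by simpa using hz), add_sub_cancel_left,
          LSeries_one_add_eq_mul_laplaceTransform_expMeanSum hf hsum hz]
      rw [laplaceTransform_sub_const (measurable_of_monotone_mul_exp hmono)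
        (fun u ↦ (abs_of_nonneg (expMeanSum_nonneg hf u)).trans_le (expMeanSum_le hK hsum u)) c hz]
      simp only [hG1]
      field_simp
      ring
  refine (hmean.comp (Real.tendsto_log_atTop.comp tendsto_natCast_atTop_atTop)).congr' ?_
  filter_upwards [eventually_gt_atTop 0] with N hN using expMeanSum_log_natCast f hN

open ArithmeticFunction.vonMangoldt in
theorem tendsto_sum_residueClass_div {q : ℕ} [NeZero q] {a : ZMod q} (ha : IsUnit a) :
    Tendsto (fun N : ℕ ↦ (∑ n ∈ Finset.Icc 1 N, residueClass a n) / (N : ℝ)) atTop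
      (𝓝 (q.totient : ℝ)⁻¹) := by
  refine tendsto_sum_div_of_eqOn_LSeries_sub (K := Real.log 4 + 4) (residueClass_nonneg a)
    (fun N ↦ ?_) (continuousOn_LFunctionResidueClassAux a) fun s hs ↦ ?_
  · calc ∑ n ∈ Finset.Icc 1 N, residueClass a n ≤ Chebyshev.psi N := by
          rw [Chebyshev.psi, Nat.floor_natCast]
          exact Finset.sum_le_sum fun n _ ↦ residueClass_le a n
      _ ≤ (Real.log 4 + 4) * N := Chebyshev.psi_le_const_mul_self N.cast_nonneg
  · simpa using eqOn_LFunctionResidueClassAux ha hs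

end WienerIkehara

end Tauberian

section Representations

open ArithmeticFunction Asymptotics

lemma norm_gaussianInt_eq_sq_add_sq (z : GaussianInt) : z.norm = z.re ^ 2 + z.im ^ 2 := by
  rw [Zsqrtd.norm_def]
  ring

lemma norm_gaussianInt_pow (z : GaussianInt) (k : ℕ) : (z ^ k).norm = z.norm ^ k :=
  map_pow Zsqrtd.normMonoidHom z k

lemma sumTwoSquaresRep_eq_ncard_norm (n : ℕ) :
    sumTwoSquaresRep n = {z : GaussianInt | z.norm = n}.ncard := by
  have hinj : Function.Injective fun z : GaussianInt ↦ (z.re, z.im) := fun z w h ↦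
    Zsqrtd.ext (congrArg Prod.fst h) (congrArg Prod.snd h)
  rw [sumTwoSquaresRep, ← Set.ncard_image_of_injective _ hinj]
  congr 1
  ext ⟨x, y⟩
  constructor
  · exact fun h ↦ ⟨⟨x, y⟩, (norm_gaussianInt_eq_sq_add_sq _).trans h, rfl⟩
  · rintro ⟨z, hz, h⟩
    cases h
    exact (norm_gaussianInt_eq_sq_add_sq z).symm.trans hz

lemma mem_of_isUnit_gaussianInt {u : GaussianInt} (hu : IsUnit u) :
    u ∈ ({⟨1, 0⟩, ⟨-1, 0⟩, ⟨0, 1⟩, ⟨0, -1⟩} : Finset GaussianInt) := by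
  have hnorm := (Zsqrtd.norm_eq_one_iff' (d := -1) (by norm_num) u).2 hu
  rw [norm_gaussianInt_eq_sq_add_sq] at hnorm
  obtain ⟨s, t⟩ := u
  obtain ⟨hs, hs'⟩ : -1 ≤ s ∧ s ≤ 1 := ⟨by nlinarith, by nlinarith⟩
  obtain ⟨ht, ht'⟩ : -1 ≤ t ∧ t ≤ 1 := ⟨by nlinarith, by nlinarith⟩
  interval_cases s <;> interval_cases t <;> simp_all

lemma sumTwoSquaresRep_le_of_forall_associated {n : ℕ} (T : Finset GaussianInt)
    (hT : ∀ z : GaussianInt, z.norm = n → ∃ t ∈ T, Associated t z) :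
    sumTwoSquaresRep n ≤ 4 * T.card := by
  set U : Finset GaussianInt := {⟨1, 0⟩, ⟨-1, 0⟩, ⟨0, 1⟩, ⟨0, -1⟩}
  have hcover : {z : GaussianInt | z.norm = n} ⊆ (Finset.image₂ (· * ·) U T : Set GaussianInt) := by
    intro z hz
    obtain ⟨t, ht, u, rfl⟩ := hT z hz
    exact Finset.mem_image₂.2 ⟨u, mem_of_isUnit_gaussianInt u.isUnit, t, ht, mul_comm _ _⟩
  calc sumTwoSquaresRep n ≤ (Finset.image₂ (· * ·) U T).card := by
        rw [sumTwoSquaresRep_eq_ncard_norm, ← Set.ncard_coe_finset]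
        exact Set.ncard_le_ncard hcover (Finset.finite_toSet _)
    _ ≤ U.card * T.card := Finset.card_image₂_le _ _ _
    _ ≤ 4 * T.card := Nat.mul_le_mul_right _ Finset.card_le_four

lemma prime_of_prime_norm {z : GaussianInt} (hz : Prime z.norm) : Prime z := by
  have : IsLocalHom (Zsqrtd.normMonoidHom (d := -1)) :=
    ⟨fun w hw ↦ (Zsqrtd.isUnit_iff_norm_isUnit w).2 hw⟩
  exact (Irreducible.of_map (f := Zsqrtd.normMonoidHom) hz.irreducible).prime

lemma exists_associated_pow_mul_pow_of_dvd {α : Type*} [CommMonoidWithZero α]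
    [IsCancelMulZero α] [DecompositionMonoid α] {P Q z : α} (hP : Prime P) (hQ : Prime Q)
    {k m : ℕ} (h : z ∣ P ^ k * Q ^ m) : ∃ i ≤ k, ∃ j ≤ m, Associated (P ^ i * Q ^ j) z := by
  obtain ⟨x, y, hx, hy, rfl⟩ := exists_dvd_and_dvd_of_dvd_mul h
  obtain ⟨i, hi, hxi⟩ := (dvd_prime_pow hP k).1 hx
  obtain ⟨j, hj, hyj⟩ := (dvd_prime_pow hQ m).1 hy
  exact ⟨i, hi, j, hj, hxi.symm.mul_mul hyj.symm⟩

lemma dvd_natCast_of_norm_eq {z : GaussianInt} {n : ℕ} (hz : z.norm = n) :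
    z ∣ (n : GaussianInt) :=
  ⟨star z, by rw [← Zsqrtd.norm_eq_mul_conj, hz, Int.cast_natCast]⟩

section PrimePower

variable {p : ℕ} (k : ℕ)

lemma sumTwoSquaresRep_pow_le_of_prime_gaussianInt (hp : Prime (p : GaussianInt)) :
    sumTwoSquaresRep (p ^ k) ≤ 4 * (k + 1) := by
  calc sumTwoSquaresRep (p ^ k)
      ≤ 4 * ((Finset.range (k + 1)).image fun i ↦ (p : GaussianInt) ^ i).card := by
        refine sumTwoSquaresRep_le_of_forall_associated _ fun z hz ↦ ?_
        have hdvd := dvd_natCast_of_norm_eq hz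
        rw [Nat.cast_pow] at hdvd
        obtain ⟨i, hi, hzi⟩ := (dvd_prime_pow hp k).1 hdvd
        exact ⟨_, Finset.mem_image_of_mem _ (Finset.mem_range_succ_iff.2 hi), hzi.symm⟩
    _ ≤ 4 * (k + 1) :=
        Nat.mul_le_mul_left _ (Finset.card_image_le.trans (Finset.card_range _).le)

lemma sumTwoSquaresRep_pow_le_of_eq_sq_add_sq (hp : p.Prime) {a b : ℤ}
    (hab : a ^ 2 + b ^ 2 = p) : sumTwoSquaresRep (p ^ k) ≤ 4 * (k + 1) := by
  set P : GaussianInt := ⟨a, b⟩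
  have hnormP : P.norm = p := (norm_gaussianInt_eq_sq_add_sq P).trans hab
  have hnormQ : (star P).norm = p := (Zsqrtd.norm_conj P).trans hnormP
  have hprime : Prime (p : ℤ) := Nat.prime_iff_prime_int.1 hp
  have hP : Prime P := prime_of_prime_norm (hnormP ▸ hprime)
  have hQ : Prime (star P) := prime_of_prime_norm (hnormQ ▸ hprime)
  have hPQ : (p : GaussianInt) = P * star P := by
    rw [← Zsqrtd.norm_eq_mul_conj, hnormP, Int.cast_natCast]
  calc sumTwoSquaresRep (p ^ k)
      ≤ 4 * ((Finset.range (k + 1)).image fun i ↦ P ^ i * star P ^ (k - i)).card := by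
        refine sumTwoSquaresRep_le_of_forall_associated _ fun z hz ↦ ?_
        have hdvd := dvd_natCast_of_norm_eq hz
        rw [Nat.cast_pow, hPQ, mul_pow] at hdvd
        obtain ⟨i, hi, j, -, hij⟩ := exists_associated_pow_mul_pow_of_dvd hP hQ hdvd
        have hnorm : (p : ℤ) ^ (i + j) = (p : ℤ) ^ k := by
          have hassoc := Zsqrtd.norm_eq_of_associated (by norm_num) hij
          rwa [hz, Zsqrtd.norm_mul, norm_gaussianInt_pow, norm_gaussianInt_pow, hnormP, hnormQ,
            ← pow_add, Nat.cast_pow] at hassoc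
        have hsum : i + j = k := Int.pow_right_injective (by exact_mod_cast hp.two_le) hnorm
        refine ⟨_, Finset.mem_image_of_mem _ (Finset.mem_range_succ_iff.2 hi), ?_⟩
        rwa [← hsum, Nat.add_sub_cancel_left]
    _ ≤ 4 * (k + 1) :=
        Nat.mul_le_mul_left _ (Finset.card_image_le.trans (Finset.card_range _).le)

lemma sumTwoSquaresRep_prime_pow_le (hp : p.Prime) : sumTwoSquaresRep (p ^ k) ≤ 4 * (k + 1) := by
  have : Fact p.Prime := ⟨hp⟩
  by_cases hinert : Irreducible (p : GaussianInt)
  · exact sumTwoSquaresRep_pow_le_of_prime_gaussianInt k hinert.prime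
  · obtain ⟨a, b, hab⟩ := GaussianInt.sq_add_sq_of_nat_prime_of_not_irreducible p hinert
    exact sumTwoSquaresRep_pow_le_of_eq_sq_add_sq (a := a) (b := b) k hp (by exact_mod_cast hab)

end PrimePower

lemma sumTwoSquaresRep_le_of_isPrimePow {n : ℕ} (hn : IsPrimePow n) :
    sumTwoSquaresRep n ≤ 4 * (Nat.log 2 n + 1) := by
  obtain ⟨p, k, hp, -, rfl⟩ := (isPrimePow_nat_iff n).1 hn
  have hk : k ≤ Nat.log 2 (p ^ k) :=
    Nat.le_log_of_pow_le one_lt_two (Nat.pow_le_pow_left hp.two_le k)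
  exact (sumTwoSquaresRep_prime_pow_le k hp).trans (by lia)

lemma finite_setOf_sq_add_sq_eq (n : ℤ) : {q : ℤ × ℤ | q.1 ^ 2 + q.2 ^ 2 = n}.Finite := by
  refine (Set.finite_Icc (-n, -n) (n, n)).subset ?_
  rintro ⟨x, y⟩ (h : x ^ 2 + y ^ 2 = n)
  have hx := Int.le_self_sq x
  have hx' := Int.le_self_sq (-x)
  have hy := Int.le_self_sq y
  have hy' := Int.le_self_sq (-y)
  rw [neg_sq] at hx' hy'
  refine ⟨⟨?_, ?_⟩, ?_, ?_⟩ <;> simp only <;> nlinarith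

lemma eight_le_sumTwoSquaresRep {n : ℕ} {a b : ℤ} (ha : 0 < a) (hab : a < b)
    (hn : a ^ 2 + b ^ 2 = n) : 8 ≤ sumTwoSquaresRep n := by
  set F : Finset (ℤ × ℤ) :=
    {(a, b), (a, -b), (-a, b), (-a, -b), (b, a), (b, -a), (-b, a), (-b, -a)} with hF
  have hcard : F.card = 8 := by
    rw [hF]
    repeat rw [Finset.card_insert_of_notMem (by
      simp only [Finset.mem_insert, Finset.mem_singleton, Prod.mk.injEq]; lia)]
    simp
  rw [sumTwoSquaresRep, ← hcard, ← Set.ncard_coe_finset]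
  refine Set.ncard_le_ncard (fun q hq ↦ ?_) (finite_setOf_sq_add_sq_eq n)
  simp only [hF, Finset.coe_insert, Finset.coe_singleton, Set.mem_insert_iff,
    Set.mem_singleton_iff] at hq
  rcases hq with rfl | rfl | rfl | rfl | rfl | rfl | rfl | rfl <;>
    simp only [Set.mem_ofPred_eq] <;> linarith

lemma sumTwoSquaresRep_prime_eq_eight {p : ℕ} (hp : p.Prime) (hp4 : p % 4 = 1) :
    sumTwoSquaresRep p = 8 := by
  have : Fact p.Prime := ⟨hp⟩
  refine le_antisymm (by simpa using sumTwoSquaresRep_prime_pow_le 1 hp) ?_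
  obtain ⟨a, b, hab⟩ := Nat.Prime.sq_add_sq (p := p) (by lia)
  have not_sq (x : ℕ) : x ^ 2 ≠ p := fun h ↦ Irreducible.not_isSquare hp ⟨x, by rw [← h, sq]⟩
  have ha : 0 < a := Nat.pos_of_ne_zero fun h ↦ not_sq b (by simpa [h] using hab)
  have hb : 0 < b := Nat.pos_of_ne_zero fun h ↦ not_sq a (by simpa [h] using hab)
  rcases lt_trichotomy a b with hlt | rfl | hlt
  · exact eight_le_sumTwoSquaresRep (a := a) (b := b) (by lia) (by lia) (by exact_mod_cast hab)
  · lia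
  · exact eight_le_sumTwoSquaresRep (a := b) (b := a) (by lia) (by lia)
      (by rw [add_comm]; exact_mod_cast hab)

lemma sumTwoSquaresRep_eq_zero_of_mod_four_eq_three {n : ℕ} (hn : n % 4 = 3) :
    sumTwoSquaresRep n = 0 := by
  have hmod : ∀ x y : ZMod 4, x ^ 2 + y ^ 2 ≠ 3 := by decide
  have hn' : (n : ZMod 4) = 3 := (ZMod.natCast_eq_natCast_iff' n 3 4).2 hn
  rw [sumTwoSquaresRep, Set.ncard_eq_zero (finite_setOf_sq_add_sq_eq n)]
  refine Set.eq_empty_of_forall_notMem ?_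
  rintro ⟨x, y⟩ (h : x ^ 2 + y ^ 2 = n)
  refine hmod x y ?_
  rw [← hn']
  exact_mod_cast congrArg (Int.cast : ℤ → ZMod 4) h

/-- The difference between `Λ(n) R(n)` and its model `8 Λ(n) 1_{n ≡ 1 (mod 4)}`, which agree at odd
primes. -/
noncomputable def sumTwoSquaresDiscrepancy (n : ℕ) : ℝ :=
  vonMangoldt n * sumTwoSquaresRep n - 8 * vonMangoldt.residueClass (1 : ZMod 4) n

lemma sumTwoSquaresDiscrepancy_prime_eq_zero {p : ℕ} (hp : p.Prime) (hp2 : p ≠ 2) :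
    sumTwoSquaresDiscrepancy p = 0 := by
  have hodd := hp.eq_two_or_odd
  have hclass : p ∈ {n : ℕ | (n : ZMod 4) = 1} ↔ p % 4 = 1 := by
    simpa using ZMod.natCast_eq_natCast_iff' p 1 4
  rcases (by lia : p % 4 = 1 ∨ p % 4 = 3) with h | h
  · rw [sumTwoSquaresDiscrepancy, vonMangoldt.residueClass,
      Set.indicator_of_mem (hclass.2 h),
      sumTwoSquaresRep_prime_eq_eight hp h]
    push_cast
    ring
  · rw [sumTwoSquaresDiscrepancy, vonMangoldt.residueClass,
      Set.indicator_of_notMem (mt hclass.1 (by lia)),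
      sumTwoSquaresRep_eq_zero_of_mod_four_eq_three h]
    simp

lemma abs_sumTwoSquaresDiscrepancy_le (n : ℕ) :
    |sumTwoSquaresDiscrepancy n| ≤ 8 * ((Nat.log 2 n : ℝ) + 1) * vonMangoldt n := by
  have hΛ : 0 ≤ vonMangoldt n := vonMangoldt_nonneg
  have hmain : vonMangoldt n * sumTwoSquaresRep n ≤
      8 * ((Nat.log 2 n : ℝ) + 1) * vonMangoldt n := by
    by_cases hn : IsPrimePow n
    · have hrep : (sumTwoSquaresRep n : ℝ) ≤ 4 * (Nat.log 2 n + 1) := by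
        exact_mod_cast sumTwoSquaresRep_le_of_isPrimePow hn
      rw [mul_comm]
      refine mul_le_mul_of_nonneg_right (hrep.trans ?_) hΛ
      gcongr
      norm_num
    · simp [vonMangoldt_eq_zero_iff.2 hn]
  have hmodel : 8 * vonMangoldt.residueClass (1 : ZMod 4) n ≤
      8 * ((Nat.log 2 n : ℝ) + 1) * vonMangoldt n := by
    rw [mul_assoc]
    gcongr
    refine (vonMangoldt.residueClass_le _ n).trans (le_mul_of_one_le_left hΛ ?_)
    linarith [(Nat.log 2 n).cast_nonneg (α := ℝ)]
  exact abs_sub_le_of_nonneg_of_le (by positivity) hmain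
    (mul_nonneg (by norm_num) (vonMangoldt.residueClass_nonneg _ n)) hmodel

lemma abs_sum_sumTwoSquaresDiscrepancy_le (N : ℕ) :
    |∑ n ∈ Finset.Icc 1 N, sumTwoSquaresDiscrepancy n| ≤ |sumTwoSquaresDiscrepancy 2| +
      8 * ((Nat.log 2 N : ℝ) + 1) * (Chebyshev.psi N - Chebyshev.theta N) := by
  refine (Finset.abs_sum_le_sum_abs _ _).trans ?_
  rw [← Finset.sum_filter_add_sum_filter_not _ Nat.Prime]
  refine add_le_add ?_ ?_
  · have honly (p : ℕ) (hp : p ∈ {n ∈ Finset.Icc 1 N | n.Prime}) :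
        |sumTwoSquaresDiscrepancy p| = if p = 2 then |sumTwoSquaresDiscrepancy 2| else 0 := by
      split_ifs with hp2
      · rw [hp2]
      · rw [sumTwoSquaresDiscrepancy_prime_eq_zero (Finset.mem_filter.1 hp).2 hp2, abs_zero]
    rw [Finset.sum_congr rfl honly, Finset.sum_ite_eq']
    split_ifs
    exacts [le_rfl, abs_nonneg _]
  · rw [Chebyshev.psi_sub_theta_eq_sum_not_prime, Nat.floor_natCast, Finset.mul_sum]
    refine Finset.sum_le_sum fun n hn ↦ (abs_sumTwoSquaresDiscrepancy_le n).trans ?_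
    have hnN : n ≤ N := (Finset.mem_Icc.1 (Finset.mem_filter.1 hn).1).2
    gcongr

lemma isLittleO_natLog_add_one_sqrt :
    (fun N : ℕ ↦ (Nat.log 2 N : ℝ) + 1) =o[atTop] fun N : ℕ ↦ √(N : ℝ) := by
  have hlog : (fun x : ℝ ↦ Real.logb 2 x) =o[atTop] fun x : ℝ ↦ √x := by
    simp_rw [Real.sqrt_eq_rpow, Real.logb, div_eq_inv_mul]
    exact (isLittleO_log_rpow_atTop (by norm_num)).const_mul_left _
  have hone : (fun _ : ℝ ↦ (1 : ℝ)) =o[atTop] fun x : ℝ ↦ √x :=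
    isLittleO_const_left.2 (.inr (tendsto_norm_atTop_atTop.comp Real.tendsto_sqrt_atTop))
  have hnat : (fun N : ℕ ↦ (Nat.log 2 N : ℝ)) =O[atTop] fun N : ℕ ↦ Real.logb 2 N :=
    .of_norm_le fun N ↦ by
      rw [Real.norm_natCast]
      exact_mod_cast Real.natLog_le_logb N 2
  exact (hnat.trans_isLittleO (hlog.comp_tendsto tendsto_natCast_atTop_atTop)).add
    (hone.comp_tendsto tendsto_natCast_atTop_atTop)

lemma isLittleO_sum_sumTwoSquaresDiscrepancy :
    (fun N : ℕ ↦ ∑ n ∈ Finset.Icc 1 N, sumTwoSquaresDiscrepancy n) =o[atTop]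
      fun N : ℕ ↦ (N : ℝ) := by
  have hconst : (fun _ : ℕ ↦ |sumTwoSquaresDiscrepancy 2|) =o[atTop] fun N : ℕ ↦ (N : ℝ) :=
    isLittleO_const_left.2 (.inr (tendsto_norm_atTop_atTop.comp tendsto_natCast_atTop_atTop))
  have hpowers : (fun N : ℕ ↦ 8 * ((Nat.log 2 N : ℝ) + 1) *
      (Chebyshev.psi N - Chebyshev.theta N)) =o[atTop] fun N : ℕ ↦ (N : ℝ) := by
    refine ((isLittleO_natLog_add_one_sqrt.const_mul_left 8).mul_isBigO
      (Chebyshev.isBigO_psi_sub_theta_sqrt.comp_tendsto tendsto_natCast_atTop_atTop)).congr_right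
      fun N ↦ ?_
    exact Real.mul_self_sqrt N.cast_nonneg
  refine IsBigO.trans_isLittleO (.of_norm_le fun N ↦ ?_) (hconst.add hpowers)
  exact abs_sum_sumTwoSquaresDiscrepancy_le N

end Representations

/-- Σ_{n ≤ N} Λ(n)·R(n) = 4N + o(N). -/
theorem statement5 :
    Tendsto (fun N : ℕ =>
        ((∑ n ∈ Finset.Icc 1 N,
            ArithmeticFunction.vonMangoldt n * (sumTwoSquaresRep n : ℝ))
          - 4 * (N : ℝ)) / (N : ℝ))
      atTop (nhds 0) := by
  have hmodel := (tendsto_sum_residueClass_div (isUnit_one (M := ZMod 4))).const_mul 8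
  have hdiff := isLittleO_sum_sumTwoSquaresDiscrepancy.tendsto_div_nhds_zero
  have hconst : (8 : ℝ) * (Nat.totient 4 : ℝ)⁻¹ = 4 := by
    rw [show Nat.totient 4 = 2 by decide]
    norm_num
  have hsum := hdiff.add (hmodel.sub_const 4)
  rw [hconst, sub_self, add_zero] at hsum
  refine hsum.congr' ?_
  filter_upwards [eventually_gt_atTop 0] with N hN
  simp only [sumTwoSquaresDiscrepancy, Finset.sum_sub_distrib, ← Finset.mul_sum]
  field_simp
  ring
end

section
/- Let Ψ = (ψ_1,…,ψ_t) be a system of affine-linear forms in d variables with integer coefficients, with t ≥ 2, and let p be a prime such that the system reduced modulo p has finite complexity, i.e. no two of the forms are affinely related modulo p. Then for all nonnegative integers a_1,…,a_t, α_Ψ(p^{a_1},…,p^{a_t}) ≤ p^{−max_{i≠j}(a_i + a_j)}. -/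
structure AffineForm (d : ℕ) where
  coeff : Fin d → ℤ
  const : ℤ

def AffineForm.eval {d : ℕ} (ψ : AffineForm d) (n : Fin d → ℤ) : ℤ :=
  (∑ i, ψ.coeff i * n i) + ψ.const

/-- Local divisor density α_Ψ(d_1,…,d_t). -/
noncomputable def localDensity {d t : ℕ} (Ψ : Fin t → AffineForm d) (D : Fin t → ℕ) : ℝ :=
  (∑ n : Fin d → Fin (Finset.univ.lcm D),
      if ∀ i, ((Ψ i).eval (fun k => (n k : ℤ))) % (D i : ℤ) = 0 then (1 : ℝ) else 0)
    / ((Finset.univ.lcm D : ℕ) : ℝ) ^ d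

/-- Two integer vectors are proportional modulo p. -/
def ProportionalMod (p : ℕ) {d : ℕ} (u v : Fin d → ℤ) : Prop :=
  ∃ a b : ZMod p, (a ≠ 0 ∨ b ≠ 0) ∧ ∀ k, a * (u k : ZMod p) = b * (v k : ZMod p)

/-!
For two of the forms `φ`, `ψ` and moduli `q`, `r` dividing `M`, the linear parts define a
homomorphism from `(ℤ/M)^d` to `ℤ/q × ℤ/r`. If it is surjective, all its fibres have the same size,
so the two conditions `q ∣ φ n` and `r ∣ ψ n` hold simultaneously with density exactly `1 / (q r)`;
the remaining conditions can only decrease the density.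

Surjectivity follows from Cramer's rule: the integers `c` such that `c • ℤ²` lies in the image of
`ℤ^d` form an ideal containing every `2 × 2` minor of the linear parts. A prime `p` dividing all
the minors would make the linear parts proportional modulo `p`, so if this is excluded for every
`p ∣ q r`, the ideal contains an integer coprime to `q r`.
-/

theorem exists_not_dvd_minor_of_not_proportionalMod {p d : ℕ} (hp : p ≠ 1) {u v : Fin d → ℤ}
    (h : ¬ ProportionalMod p u v) : ∃ k l, ¬ (p : ℤ) ∣ u k * v l - u l * v k := by
  have : Nontrivial (ZMod p) := ZMod.nontrivial_iff.2 hp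
  by_contra! hminor
  have hminor_cast (k l) : (u k * v l : ZMod p) = u l * v k := by
    have := (ZMod.intCast_zmod_eq_zero_iff_dvd _ p).2 (hminor k l)
    push_cast at this
    exact sub_eq_zero.1 this
  apply h
  by_cases hu : ∀ k, (u k : ZMod p) = 0
  · exact ⟨1, 0, Or.inl one_ne_zero, fun k => by rw [hu k, mul_zero, zero_mul]⟩
  · obtain ⟨k, hk⟩ := not_forall.1 hu
    exact ⟨v k, u k, Or.inr hk, fun l => by rw [mul_comm, hminor_cast k l]⟩

theorem exists_mem_isCoprime_of_forall_prime (I : Ideal ℤ) (m : ℕ)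
    (h : ∀ p : ℕ, p.Prime → p ∣ m → ∃ x ∈ I, ¬ (p : ℤ) ∣ x) : ∃ c ∈ I, IsCoprime c (m : ℤ) := by
  obtain ⟨c, rfl⟩ := IsPrincipalIdealRing.principal I
  refine ⟨c, Ideal.mem_span_singleton_self c, Int.isCoprime_iff_gcd_eq_one.2 ?_⟩
  refine (Nat.coprime_of_dvd fun p hp hpm hpc => ?_ : Nat.Coprime m c.natAbs).symm
  obtain ⟨x, hx, hpx⟩ := h p hp hpm
  exact hpx ((Int.natCast_dvd.2 hpc).trans (Ideal.mem_span_singleton.1 hx))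

theorem card_fiber_mul_card_of_surjective {G H : Type*} [AddGroup G] [AddGroup H] [Fintype G]
    [Fintype H] [DecidableEq H] (f : G →+ H) (hf : Function.Surjective f) (y : H) :
    Finset.card {x | f x = y} * Fintype.card H = Fintype.card G := by
  calc
    Finset.card {x | f x = y} * Fintype.card H = ∑ z : H, Finset.card {x | f x = z} := by
      rw [Finset.sum_congr rfl fun z _ => AddMonoidHom.card_fiber_eq_of_mem_range f (hf z) (hf y),
        Finset.sum_const, Finset.card_univ, smul_eq_mul, mul_comm]
    _ = Fintype.card G :=
      (Finset.card_eq_sum_card_fiberwise fun _ _ => Finset.mem_coe.2 (Finset.mem_univ _)).symm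

theorem finEquiv_eq_natCast {m : ℕ} [NeZero m] (x : Fin m) :
    ZMod.finEquiv m x = ((x : ℕ) : ZMod m) := by
  obtain ⟨k, rfl⟩ := Nat.exists_eq_succ_of_ne_zero (NeZero.ne m)
  exact (Fin.cast_val_eq_self x).symm

section DotProductPair

variable {R ι : Type*} [CommRing R] [Fintype ι]

/-- The linear map `x ↦ (u ⬝ᵥ x, v ⬝ᵥ x)` whose two coordinates are the linear forms with
coefficient vectors `u` and `v`. -/
def dotProductPair (u v : ι → R) : (ι → R) →ₗ[R] R × R :=
  (dotProductBilin R R u).prod (dotProductBilin R R v)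

@[simp]
theorem dotProductPair_apply (u v x : ι → R) : dotProductPair u v x = (u ⬝ᵥ x, v ⬝ᵥ x) :=
  rfl

-- Cramer's rule for the `2 × 2` system in the variables `x k` and `x l`.
theorem minor_mem_colon_range_dotProductPair (u v : ι → R) (k l : ι) :
    u k * v l - u l * v k ∈ (LinearMap.range (dotProductPair u v)).colon Set.univ := by
  classical
  refine Submodule.mem_colon.2 fun w _ =>
    ⟨Pi.single k (v l * w.1 - u l * w.2) + Pi.single l (u k * w.2 - v k * w.1), ?_⟩
  ext <;>
    simp only [dotProductPair_apply, dotProduct_add, dotProduct_single, Prod.smul_fst,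
      Prod.smul_snd, smul_eq_mul] <;>
    ring

end DotProductPair

theorem exists_mem_colon_range_dotProductPair_isCoprime {d m : ℕ} {u v : Fin d → ℤ}
    (h : ∀ p : ℕ, p.Prime → p ∣ m → ¬ ProportionalMod p u v) :
    ∃ c ∈ (LinearMap.range (dotProductPair u v)).colon Set.univ, IsCoprime c (m : ℤ) := by
  refine exists_mem_isCoprime_of_forall_prime _ m fun p hp hpm => ?_
  obtain ⟨k, l, hkl⟩ := exists_not_dvd_minor_of_not_proportionalMod hp.ne_one (h p hp hpm)
  exact ⟨_, minor_mem_colon_range_dotProductPair u v k l, hkl⟩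

section DotProductMod

variable {ι : Type*} [Fintype ι] {M q r : ℕ}

/-- The linear form with integer coefficient vector `u`, as a homomorphism from vectors modulo `M`
to residues modulo a divisor `q` of `M`. -/
def dotProductMod (hq : q ∣ M) (u : ι → ℤ) : (ι → ZMod M) →+ ZMod q :=
  (dotProductBilin ℤ ℤ fun k => (u k : ZMod q)).toAddMonoidHom.comp
    ((ZMod.castHom hq (ZMod q)).toAddMonoidHom.compLeft ι)

theorem dotProductMod_intCast (hq : q ∣ M) (u n : ι → ℤ) :
    dotProductMod hq u (fun k => (n k : ZMod M)) = ((u ⬝ᵥ n : ℤ) : ZMod q) := by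
  simp [dotProductMod, dotProductBilin, dotProduct]

theorem dotProductMod_prod_surjective (hq : q ∣ M) (hr : r ∣ M) (u v : ι → ℤ) {c : ℤ}
    (hc : c ∈ (LinearMap.range (dotProductPair u v)).colon Set.univ)
    (hcop : IsCoprime c ((q * r : ℕ) : ℤ)) :
    Function.Surjective ((dotProductMod hq u).prod (dotProductMod hr v)) := by
  rintro ⟨y, z⟩
  obtain ⟨y, rfl⟩ := ZMod.intCast_surjective y
  obtain ⟨z, rfl⟩ := ZMod.intCast_surjective z
  obtain ⟨s, b, hsb⟩ := hcop
  obtain ⟨x, hx⟩ := Submodule.mem_colon.1 hc (s * y, s * z) trivial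
  obtain ⟨hux, hvx⟩ : u ⬝ᵥ x = c * (s * y) ∧ v ⬝ᵥ x = c * (s * z) := by
    simpa [Prod.ext_iff] using hx
  have inverse_mod {m : ℕ} (hm : m ∣ q * r) : (c * s : ZMod m) = 1 := by
    have hqr : (((q * r : ℕ) : ℤ) : ZMod m) = 0 := by
      rw [Int.cast_natCast, (ZMod.natCast_eq_zero_iff _ _).2 hm]
    rw [← Int.cast_mul, mul_comm, ← Int.cast_one, ← hsb, Int.cast_add, Int.cast_mul b, hqr,
      mul_zero, add_zero]
  refine ⟨fun k => (x k : ZMod M), Prod.ext ?_ ?_⟩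
  · simp [dotProductMod_intCast, hux, ← mul_assoc, inverse_mod (dvd_mul_right q r)]
  · simp [dotProductMod_intCast, hvx, ← mul_assoc, inverse_mod (dvd_mul_left r q)]

end DotProductMod

namespace AffineForm

variable {d M q r : ℕ}

theorem dvd_eval_iff_dotProductMod_eq (hq : q ∣ M) (φ : AffineForm d) (n : Fin d → ℤ) :
    (q : ℤ) ∣ φ.eval n ↔ dotProductMod hq φ.coeff (fun k => (n k : ZMod M)) = -φ.const := by
  rw [dotProductMod_intCast, eq_neg_iff_add_eq_zero, ← Int.cast_add,
    ZMod.intCast_zmod_eq_zero_iff_dvd]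
  rfl

theorem card_dvd_eval_and_dvd_eval [NeZero M] (hq : q ∣ M) (hr : r ∣ M) (φ ψ : AffineForm d)
    (h : ∀ p : ℕ, p.Prime → p ∣ q * r → ¬ ProportionalMod p φ.coeff ψ.coeff) :
    Finset.card {n : Fin d → Fin M | (q : ℤ) ∣ φ.eval (fun k => (n k : ℤ)) ∧
      (r : ℤ) ∣ ψ.eval (fun k => (n k : ℤ))} * (q * r) = M ^ d := by
  have : NeZero q := ⟨ne_zero_of_dvd_ne_zero (NeZero.ne M) hq⟩
  have : NeZero r := ⟨ne_zero_of_dvd_ne_zero (NeZero.ne M) hr⟩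
  obtain ⟨c, hc, hcop⟩ := exists_mem_colon_range_dotProductPair_isCoprime h
  have hfiber := card_fiber_mul_card_of_surjective _
    (dotProductMod_prod_surjective hq hr φ.coeff ψ.coeff hc hcop)
    ((-φ.const : ZMod q), (-ψ.const : ZMod r))
  simp only [Fintype.card_prod, ZMod.card, Fintype.card_fun, Fintype.card_fin] at hfiber
  rw [← hfiber]
  congr 1
  refine Finset.card_equiv (Equiv.piCongrRight fun _ => (ZMod.finEquiv M).toEquiv) fun n => ?_
  have hn : Equiv.piCongrRight (fun _ => (ZMod.finEquiv M).toEquiv) n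
      = fun k => (((n k : ℕ) : ℤ) : ZMod M) := by
    funext k
    rw [Int.cast_natCast]
    exact finEquiv_eq_natCast (n k)
  rw [hn, Finset.mem_filter_univ, Finset.mem_filter_univ, dvd_eval_iff_dotProductMod_eq hq,
    dvd_eval_iff_dotProductMod_eq hr, AddMonoidHom.prod_apply, Prod.mk_inj]

end AffineForm

theorem statement17_general {d t : ℕ} (Ψ : Fin t → AffineForm d) (D : Fin t → ℕ)
    (hD : ∀ k, D k ≠ 0) (i j : Fin t)
    (h : ∀ p : ℕ, p.Prime → p ∣ D i * D j → ¬ ProportionalMod p (Ψ i).coeff (Ψ j).coeff) :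
    localDensity Ψ D ≤ ((D i * D j : ℕ) : ℝ)⁻¹ := by
  unfold localDensity
  have hi : D i ∣ Finset.univ.lcm D := Finset.dvd_lcm (Finset.mem_univ i)
  have hj : D j ∣ Finset.univ.lcm D := Finset.dvd_lcm (Finset.mem_univ j)
  have hM : NeZero (Finset.univ.lcm D) := ⟨by simpa [Finset.lcm_eq_zero_iff] using hD⟩
  generalize Finset.univ.lcm D = M at hi hj hM ⊢
  have hDij : D i * D j ≠ 0 := mul_ne_zero (hD i) (hD j)
  have hcount := AffineForm.card_dvd_eval_and_dvd_eval hi hj (Ψ i) (Ψ j) h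
  have hMd : (0 : ℝ) < (M : ℝ) ^ d := pow_pos (Nat.cast_pos.2 (NeZero.pos M)) d
  rw [Finset.sum_boole, div_le_iff₀ hMd, inv_mul_eq_div, le_div_iff₀ (by positivity)]
  norm_cast
  rw [← hcount]
  gcongr with n
  exact fun hn => ⟨Int.dvd_of_emod_eq_zero (hn i), Int.dvd_of_emod_eq_zero (hn j)⟩

/-- bound for local divisor densities of a system of finite
complexity modulo p. The conclusion, stated for every pair i ≠ j, is
equivalent to α_Ψ(p^{a_1},…,p^{a_t}) ≤ p^{−max_{i≠j}(a_i+a_j)}. -/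
theorem statement17 (d t : ℕ) (ht : 2 ≤ t) (Ψ : Fin t → AffineForm d)
    (p : ℕ) (hp : p.Prime)
    (hfc : ∀ i j, i ≠ j → ¬ ProportionalMod p (Ψ i).coeff (Ψ j).coeff)
    (a : Fin t → ℕ) :
    ∀ i j, i ≠ j →
      localDensity Ψ (fun k => p ^ a k) ≤ ((p : ℝ) ^ (a i + a j))⁻¹ := by
  intro i j hij
  rw [← Nat.cast_pow, pow_add]
  refine statement17_general Ψ _ (fun k => pow_ne_zero _ hp.ne_zero) i j fun ℓ hℓ hdvd => ?_
  obtain rfl := (Nat.prime_dvd_prime_iff_eq hℓ hp).1 (hℓ.dvd_of_dvd_pow (pow_add p _ _ ▸ hdvd))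
  exact hfc i j hij
end
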